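/- arXiv:2208.10203 — 2 statements merged into one kernel-verified Lean document; each statement's English description precedes it below -/
import Mathlib

section
/- Let 0<p<1. The difference system 𝒟=(d_n)_{n=1}^∞, where d_n = e_n − e_{n−1} (with the convention e_0 = 0), is a semi-normalized monotone Schauder basis of ℓ_p whose partial-sum projections have norm at most 1, such that span(d_n : 1≤n≤N) = span(e_n : 1≤n≤N) for every N, and whose unconditionality parameters satisfy k̃_m[𝒟,ℓ_p] = m^{1/p} for all m∈ℕ. In particular, for every finitely supported scalar sequence (a_n) and every m, (|a_m|^p + Σ_{n=1}^{m−1} |a_n − a_{n+1}|^p)^{1/p} ≤ (Σ_{n=1}^∞ |a_n − a_{n+1}|^p)^{1/p}. -/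
noncomputable section

open Classical
open scoped ENNReal NNReal

namespace AGpaper

/-! ### Convergence and completeness with respect to a gauge -/

/-- Convergence of a sequence with respect to a gauge (quasi-norm) `q`. -/
def QTendsto {X : Type*} [AddCommGroup X] (q : X → ℝ) (u : ℕ → X) (x : X) : Prop :=
  ∀ ε : ℝ, 0 < ε → ∃ n₀ : ℕ, ∀ n, n₀ ≤ n → q (u n - x) < ε

/-- Cauchy condition with respect to a gauge `q`. -/
def QCauchy {X : Type*} [AddCommGroup X] (q : X → ℝ) (u : ℕ → X) : Prop :=
  ∀ ε : ℝ, 0 < ε → ∃ n₀ : ℕ, ∀ m, n₀ ≤ m → ∀ n, n₀ ≤ n → q (u m - u n) < ε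

/-- A quasi-Banach space structure on a real vector space `X`. -/
structure QuasiBanach (X : Type*) [AddCommGroup X] [Module ℝ X] where
  q : X → ℝ
  kappa : ℝ
  one_le_kappa : 1 ≤ kappa
  q_nonneg : ∀ x, 0 ≤ q x
  q_eq_zero_iff : ∀ x, q x = 0 ↔ x = 0
  q_smul : ∀ (a : ℝ) (x : X), q (a • x) = |a| * q x
  q_triangle : ∀ x y, q (x + y) ≤ kappa * (q x + q y)
  complete : ∀ u : ℕ → X, QCauchy q u → ∃ x, QTendsto q u x

/-- `X` is `p`-convex (0<p≤1): after renorming the quasi-norm is a `p`-norm. -/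
def QuasiBanach.PConvex {X : Type*} [AddCommGroup X] [Module ℝ X]
    (B : QuasiBanach X) (p : ℝ) : Prop :=
  ∃ q' : X → ℝ, (∀ x, 0 ≤ q' x) ∧ (∀ (a : ℝ) (x : X), q' (a • x) = |a| * q' x) ∧
    (∀ x y, q' (x + y) ^ p ≤ q' x ^ p + q' y ^ p) ∧
    ∃ c C : ℝ, 0 < c ∧ ∀ x, c * B.q x ≤ q' x ∧ q' x ≤ C * B.q x

/-! ### Biorthogonal systems and Schauder bases -/

variable {X : Type*} [AddCommGroup X] [Module ℝ X]

/-- A biorthogonal system in a space of vectors `X` which is equipped with a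
membership predicate `mem` (the carrier of the space) and a gauge `nrm`:
the coordinate functionals are linear and bounded on the carrier. -/
structure BioSystem (mem : X → Prop) (nrm : X → ℝ) where
  vec : ℕ → X
  vec_mem : ∀ n, mem (vec n)
  coord : ℕ → X → ℝ
  coord_add : ∀ (n : ℕ) (f g : X), mem f → mem g → coord n (f + g) = coord n f + coord n g
  coord_smul : ∀ (n : ℕ) (a : ℝ) (f : X), mem f → coord n (a • f) = a * coord n f
  coord_bdd : ∀ n : ℕ, ∃ C : ℝ, ∀ f, mem f → |coord n f| ≤ C * nrm f
  biorth : ∀ m n, coord m (vec n) = if m = n then (1 : ℝ) else 0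

/-- A Schauder basis: a biorthogonal system whose expansions converge. -/
structure SchauderB (mem : X → Prop) (nrm : X → ℝ) extends BioSystem mem nrm where
  expansion : ∀ f, mem f →
    QTendsto nrm (fun m => ∑ n ∈ Finset.range m, coord n f • vec n) f

/-- A Schauder basis of a quasi-Banach space. -/
abbrev QBasis {X : Type*} [AddCommGroup X] [Module ℝ X] (B : QuasiBanach X) :=
  SchauderB (fun _ : X => True) B.q

variable {mem : X → Prop} {nrm : X → ℝ}

/-- Coordinate projection on a finite set `A`. -/
def BioSystem.proj (b : BioSystem mem nrm) (A : Finset ℕ) (f : X) : X :=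
  ∑ n ∈ A, b.coord n f • b.vec n

def BioSystem.SemiNormalized (b : BioSystem mem nrm) : Prop :=
  ∃ c C : ℝ, 0 < c ∧ ∀ n, c ≤ nrm (b.vec n) ∧ nrm (b.vec n) ≤ C

/-- `A` is a greedy set of `f`. -/
def BioSystem.GreedySet (b : BioSystem mem nrm) (f : X) (A : Finset ℕ) : Prop :=
  ∀ j ∈ A, ∀ k, k ∉ A → |b.coord k f| ≤ |b.coord j f|

def BioSystem.QuasiGreedy (b : BioSystem mem nrm) : Prop :=
  ∃ C : ℝ, ∀ f, mem f → ∀ A : Finset ℕ, b.GreedySet f A → nrm (b.proj A f) ≤ C * nrm f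

def BioSystem.Democratic (b : BioSystem mem nrm) : Prop :=
  ∃ C : ℝ, ∀ A B : Finset ℕ, A.card ≤ B.card →
    nrm (∑ n ∈ A, b.vec n) ≤ C * nrm (∑ n ∈ B, b.vec n)

def BioSystem.AlmostGreedy (b : BioSystem mem nrm) : Prop :=
  b.QuasiGreedy ∧ b.Democratic

/-- Asymptotic suppression unconditionality: coordinate projections `S_A` with
`|A| < min A` are uniformly bounded. -/
def BioSystem.ASU (b : BioSystem mem nrm) : Prop :=
  ∃ D : ℝ, ∀ A : Finset ℕ, (∀ n ∈ A, A.card < n) →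
    ∀ f, mem f → nrm (b.proj A f) ≤ D * nrm f

/-- The fundamental function (upper super-democracy function). -/
def BioSystem.fundFun (b : BioSystem mem nrm) (m : ℕ) : ℝ :=
  sSup {t : ℝ | ∃ (A : Finset ℕ) (ε : ℕ → ℝ), A.card ≤ m ∧ (∀ n ∈ A, |ε n| = 1) ∧
    t = nrm (∑ n ∈ A, ε n • b.vec n)}

/-- The unconditionality parameters `k_m`. -/
def BioSystem.kparam (b : BioSystem mem nrm) (m : ℕ) : ℝ :=
  sSup {t : ℝ | ∃ (A : Finset ℕ) (f : X), A.card ≤ m ∧ mem f ∧ nrm f ≤ 1 ∧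
    t = nrm (b.proj A f)}

/-- The unconditionality parameters `k̃_m` (restricted to the span of the first
`m` basis vectors). -/
def BioSystem.ktilde (b : BioSystem mem nrm) (m : ℕ) : ℝ :=
  sSup {t : ℝ | ∃ (A : Finset ℕ) (a : ℕ → ℝ),
    nrm (∑ n ∈ Finset.range m, a n • b.vec n) ≤ 1 ∧
    t = nrm (b.proj A (∑ n ∈ Finset.range m, a n • b.vec n))}

/-! ### Symmetric and subsymmetric sequence spaces -/

/-- The indicator of `{0, 1, ..., m-1}`. -/
def indic (m : ℕ) : ℕ → ℝ := fun j => if j < m then 1 else 0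

/-- The `n`-th unit vector. -/
def unitVec (n : ℕ) : ℕ → ℝ := fun j => if j = n then 1 else 0

/-- The spreading `Σ_n ε_n f_n e_{φ(n)}` of a sequence `f`. -/
def spread (φ : ℕ → ℕ) (ε : ℕ → ℝ) (f : ℕ → ℝ) : ℕ → ℝ :=
  fun j => if h : ∃ n, φ n = j then ε h.choose * f h.choose else 0

/-- A symmetric sequence space: a quasi-Banach sequence space whose quasi-norm is
invariant under permutations and signs. -/
structure SymmetricSpace where
  mem : (ℕ → ℝ) → Prop
  nrm : (ℕ → ℝ) → ℝ
  kappa : ℝ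
  one_le_kappa : 1 ≤ kappa
  zero_mem : mem 0
  add_mem : ∀ {f g}, mem f → mem g → mem (f + g)
  smul_mem : ∀ (a : ℝ) {f}, mem f → mem (a • f)
  nrm_nonneg : ∀ f, 0 ≤ nrm f
  nrm_eq_zero : ∀ {f}, mem f → (nrm f = 0 ↔ f = 0)
  nrm_smul : ∀ (a : ℝ) (f : ℕ → ℝ), nrm (a • f) = |a| * nrm f
  nrm_triangle : ∀ {f g}, mem f → mem g → nrm (f + g) ≤ kappa * (nrm f + nrm g)
  complete : ∀ u : ℕ → (ℕ → ℝ), (∀ n, mem (u n)) → QCauchy nrm u →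
    ∃ f, mem f ∧ QTendsto nrm u f
  symmetric : ∀ {f}, mem f → ∀ (ε : ℕ → ℝ), (∀ n, |ε n| = 1) → ∀ π : Equiv.Perm ℕ,
    mem (fun j => ε j * f (π j)) ∧ nrm (fun j => ε j * f (π j)) = nrm f

/-- Fundamental function of a symmetric sequence space. -/
def SymmetricSpace.Lam (S : SymmetricSpace) (m : ℕ) : ℝ := S.nrm (indic m)

/-- A (locally convex, i.e. Banach) subsymmetric sequence space. -/
structure SubsymmetricSpace where
  mem : (ℕ → ℝ) → Prop
  nrm : (ℕ → ℝ) → ℝ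
  zero_mem : mem 0
  add_mem : ∀ {f g}, mem f → mem g → mem (f + g)
  smul_mem : ∀ (a : ℝ) {f}, mem f → mem (a • f)
  nrm_nonneg : ∀ f, 0 ≤ nrm f
  nrm_eq_zero : ∀ {f}, mem f → (nrm f = 0 ↔ f = 0)
  nrm_smul : ∀ (a : ℝ) (f : ℕ → ℝ), nrm (a • f) = |a| * nrm f
  nrm_triangle : ∀ {f g}, mem f → mem g → nrm (f + g) ≤ nrm f + nrm g
  complete : ∀ u : ℕ → (ℕ → ℝ), (∀ n, mem (u n)) → QCauchy nrm u →
    ∃ f, mem f ∧ QTendsto nrm u f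
  unit_mem : ∀ n, mem (unitVec n)
  unit_basis : ∀ f, mem f →
    QTendsto nrm (fun m => fun j => if j < m then f j else 0) f
  subsym : ∀ {f}, mem f → ∀ (ε : ℕ → ℝ), (∀ n, |ε n| = 1) → ∀ φ : ℕ → ℕ, StrictMono φ →
    mem (spread φ ε f) ∧ nrm (spread φ ε f) = nrm f

/-- Fundamental function of (the unit vector system of) a subsymmetric sequence space. -/
def SubsymmetricSpace.Lam (S : SubsymmetricSpace) (m : ℕ) : ℝ := S.nrm (indic m)

/-- The dual fundamental function `Λ*_m = m / Λ_m`. -/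
def SubsymmetricSpace.LamStar (S : SubsymmetricSpace) (m : ℕ) : ℝ := (m : ℝ) / S.Lam m

/-- Lower regularity property of a sequence of positive reals (indexed by `m ≥ 1`). -/
def LRP (Γ : ℕ → ℝ) : Prop := ∃ b : ℕ, 0 < b ∧ ∀ m : ℕ, 1 ≤ m → 2 * Γ m ≤ Γ (b * m)

/-- Upper regularity property. -/
def URP (Γ : ℕ → ℝ) : Prop := ∃ b : ℕ, 0 < b ∧ ∀ m : ℕ, 1 ≤ m → 2 * Γ (b * m) ≤ (b : ℝ) * Γ m

/-- Superreflexivity of a subsymmetric sequence space: it admits an equivalent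
uniformly convex norm. -/
def SubsymmetricSpace.Superreflexive (S : SubsymmetricSpace) : Prop :=
  ∃ nrm' : (ℕ → ℝ) → ℝ,
    (∀ f, S.mem f → 0 ≤ nrm' f) ∧
    (∀ (a : ℝ) (f), S.mem f → nrm' (a • f) = |a| * nrm' f) ∧
    (∀ f g, S.mem f → S.mem g → nrm' (f + g) ≤ nrm' f + nrm' g) ∧
    (∃ c C : ℝ, 0 < c ∧ ∀ f, S.mem f → c * S.nrm f ≤ nrm' f ∧ nrm' f ≤ C * S.nrm f) ∧
    (∀ ε : ℝ, 0 < ε → ∃ δ : ℝ, 0 < δ ∧ ∀ f g, S.mem f → S.mem g →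
      nrm' f ≤ 1 → nrm' g ≤ 1 → ε ≤ nrm' (f - g) → nrm' (f + g) ≤ 2 * (1 - δ))

/-! ### Upper and lower estimates -/

/-- A finite family with pairwise disjoint supports. -/
def DisjFam {ι : Type*} (F : ι → (ℕ → ℝ)) (J : Finset ι) : Prop :=
  ∀ i ∈ J, ∀ j ∈ J, i ≠ j → ∀ k, F i k = 0 ∨ F j k = 0

/-- `(Σ_{i∈J} |g i|^q)^{1/q}`, interpreted as `max_{i∈J} |g i|` when `q = ∞`. -/
def estNorm (q : ℝ≥0∞) {ι : Type*} (J : Finset ι) (g : ι → ℝ) : ℝ :=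
  if q = ⊤ then ((J.sup fun i => Real.toNNReal |g i| : NNReal) : ℝ)
  else (∑ i ∈ J, |g i| ^ q.toReal) ^ (1 / q.toReal)

/-- Upper `s`-estimate for a subsymmetric space (`s` finite). -/
def SubsymmetricSpace.UpperEst (S : SubsymmetricSpace) (s : ℝ) : Prop :=
  ∃ C : ℝ, ∀ (J : Finset ℕ) (F : ℕ → (ℕ → ℝ)), (∀ i ∈ J, S.mem (F i)) → DisjFam F J →
    S.nrm (∑ i ∈ J, F i) ≤ C * (∑ i ∈ J, S.nrm (F i) ^ s) ^ (1 / s)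

/-- Lower `q`-estimate for a subsymmetric space (`q` finite). -/
def SubsymmetricSpace.LowerEst (S : SubsymmetricSpace) (q : ℝ) : Prop :=
  ∃ C : ℝ, ∀ (J : Finset ℕ) (F : ℕ → (ℕ → ℝ)), (∀ i ∈ J, S.mem (F i)) → DisjFam F J →
    (∑ i ∈ J, S.nrm (F i) ^ q) ^ (1 / q) ≤ C * S.nrm (∑ i ∈ J, F i)

/-- Lower `q`-estimate, `q ∈ (0, ∞]`. -/
def SubsymmetricSpace.LowerEstE (S : SubsymmetricSpace) (q : ℝ≥0∞) : Prop :=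
  ∃ C : ℝ, ∀ (J : Finset ℕ) (F : ℕ → (ℕ → ℝ)), (∀ i ∈ J, S.mem (F i)) → DisjFam F J →
    estNorm q J (fun i => S.nrm (F i)) ≤ C * S.nrm (∑ i ∈ J, F i)

/-! ### Squeeze-symmetry -/

/-- The system is squeezed between the symmetric spaces `S₁` and `S₂`: the series
transform is bounded from `S₁` (on finitely supported vectors) and the coefficient
transform is bounded into `S₂`. -/
def BioSystem.SqueezedBetween (b : BioSystem mem nrm) (S₁ S₂ : SymmetricSpace) : Prop :=
  (∃ C : ℝ, ∀ a : ℕ →₀ ℝ, S₁.mem ⇑a →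
    nrm (∑ n ∈ a.support, a n • b.vec n) ≤ C * S₁.nrm ⇑a) ∧
  (∃ C : ℝ, ∀ f, mem f → S₂.mem (fun n => b.coord n f) ∧
    S₂.nrm (fun n => b.coord n f) ≤ C * nrm f)

/-- Squeeze-symmetric system: squeezed between two symmetric spaces with
equivalent fundamental functions. -/
def BioSystem.SqueezeSymmetric (b : BioSystem mem nrm) : Prop :=
  ∃ S₁ S₂ : SymmetricSpace, b.SqueezedBetween S₁ S₂ ∧
    ∃ c C : ℝ, 0 < c ∧ ∀ m : ℕ, 1 ≤ m →
      c * S₂.Lam m ≤ S₁.Lam m ∧ S₁.Lam m ≤ C * S₂.Lam m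

/-! ### Ordered partitions and the Dilworth–Kalton–Kutzarova construction -/

/-- An ordered partition of `ℕ` into (finite, nonempty) integer intervals. -/
structure OrderedPartition where
  part : ℕ → Finset ℕ
  nonempty : ∀ n, (part n).Nonempty
  ordered : ∀ n, ∀ i ∈ part n, ∀ j ∈ part (n + 1), i < j
  covers : ∀ k : ℕ, ∃ n, k ∈ part n

def OrderedPartition.N (σ : OrderedPartition) (n : ℕ) : ℕ := (σ.part n).card

def OrderedPartition.M (σ : OrderedPartition) (r : ℕ) : ℕ := ∑ n ∈ Finset.range r, σ.N n

/-- The averaging projection `P_σ`. -/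
def OrderedPartition.Pavg (σ : OrderedPartition) (f : ℕ → ℝ) : ℕ → ℝ := fun j =>
  if h : ∃ n, j ∈ σ.part n then
    (∑ i ∈ σ.part h.choose, f i) / ((σ.part h.choose).card : ℝ)
  else 0

/-- The complementary projection `Q_σ = Id - P_σ`. -/
def OrderedPartition.Qavg (σ : OrderedPartition) (f : ℕ → ℝ) : ℕ → ℝ := f - σ.Pavg f

/-- The functionals `v_n* = (Λ*_{N_n})⁻¹ Σ_{j∈σ_n} e_j*`. -/
def vstar (S : SubsymmetricSpace) (σ : OrderedPartition) (n : ℕ) (f : ℕ → ℝ) : ℝ :=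
  (S.Lam (σ.N n) / (σ.N n : ℝ)) * ∑ j ∈ σ.part n, f j

/-- The map `H(f) = Σ_n v_n*(f) x_n`. -/
def Hmap {X : Type*} [AddCommGroup X] [Module ℝ X] (B : QuasiBanach X) (b : QBasis B)
    (S : SubsymmetricSpace) (σ : OrderedPartition) (f : ℕ → ℝ) : X :=
  ∑ᶠ n, vstar S σ n f • b.vec n

/-- The quasi-norm `‖f‖ = ‖Q_σ f‖_S + ‖H f‖_X` on finitely supported sequences,
whose completion is the space `𝕐[𝒳,𝕊,σ]`. -/
def YNorm {X : Type*} [AddCommGroup X] [Module ℝ X] (B : QuasiBanach X) (b : QBasis B)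
    (S : SubsymmetricSpace) (σ : OrderedPartition) (f : ℕ → ℝ) : ℝ :=
  S.nrm (σ.Qavg f) + B.q (Hmap B b S σ f)

/-! ### Concrete sequence spaces -/

/-- Membership in `ℓ_p`, `0 < p < ∞`. -/
def lpMem (p : ℝ) (f : ℕ → ℝ) : Prop := Summable fun n => |f n| ^ p

/-- The `ℓ_p` quasi-norm, `0 < p < ∞`. -/
def lpNrm (p : ℝ) (f : ℕ → ℝ) : ℝ := (∑' n, |f n| ^ p) ^ (1 / p)

/-- Membership in `ℓ_p` for extended `p` (where `ℓ_∞` means `c₀`). -/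
def lpMemE (p : ℝ≥0∞) (f : ℕ → ℝ) : Prop :=
  if p = ⊤ then Filter.Tendsto f Filter.atTop (nhds 0) else lpMem p.toReal f

/-- The `ℓ_p` quasi-norm for extended `p`. -/
def lpNrmE (p : ℝ≥0∞) (f : ℕ → ℝ) : ℝ :=
  if p = ⊤ then ⨆ n, |f n| else lpNrm p.toReal f

/-- Membership in the matrix space `Z_{p,q} = ℓ_q(ℓ_p)` (with `ℓ_∞` meaning `c₀`). -/
def ZMem (p q : ℝ≥0∞) (f : ℕ → ℕ → ℝ) : Prop :=
  (∀ n, lpMemE p (f n)) ∧ lpMemE q (fun n => lpNrmE p (f n))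

/-- The quasi-norm of `Z_{p,q} = ℓ_q(ℓ_p)`. -/
def ZNrm (p q : ℝ≥0∞) (f : ℕ → ℕ → ℝ) : ℝ := lpNrmE q (fun n => lpNrmE p (f n))


/-- The difference system `d_n = e_n - e_{n-1}` (with `e_{-1} = 0`). -/
def dvec : ℕ → (ℕ → ℝ) := fun n => if n = 0 then unitVec 0 else unitVec n - unitVec (n - 1)

/-! The coefficients of `f ∈ ℓ_p` in the system `d_n` are the tail sums `a_n = ∑_{k ≥ n} f_k`, and
`p`-subadditivity of `|·|^p` gives `|a_n|^p ≤ ∑_{k ≥ n} |f_k|^p`. Conversely `f_j = a_j - a_{j+1}`,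
so the partial sum `∑_{n ≤ m} a_n d_n` keeps `f_0, …, f_{m-1}` and gathers the whole tail of `f` in
the entry `m`, which does not increase the `p`-norm. For an arbitrary `A`, every entry of `S_A f` is
one of `f_j`, `a_j`, `-a_{j+1}`, `0`, hence at most `‖f‖` in absolute value; this yields
`k̃_m ≤ m^{1/p}`. Equality is attained at `e_{m-1} = d_0 + ⋯ + d_{m-1}`, whose projection onto every
second coordinate, counted down from `m - 1`, has all its first `m` entries equal to `±1`. -/

open Filter Finset Topology

section RpowSubadditive

variable {ι E : Type*} [NormedAddCommGroup E] {p : ℝ}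

lemma norm_sum_rpow_le_sum_norm_rpow (hp0 : 0 < p) (hp1 : p ≤ 1) (s : Finset ι) (f : ι → E) :
    ‖∑ i ∈ s, f i‖ ^ p ≤ ∑ i ∈ s, ‖f i‖ ^ p :=
  le_sum_of_subadditive (fun x : E => ‖x‖ ^ p) (by simp [hp0.ne'])
    (fun x y => (Real.rpow_le_rpow (norm_nonneg _) (norm_add_le x y) hp0.le).trans
      (Real.rpow_add_le_add_rpow (norm_nonneg x) (norm_nonneg y) hp0.le hp1)) s f

lemma norm_rpow_le_tsum_of_hasSum (hp0 : 0 < p) (hp1 : p ≤ 1) {f : ι → E} {a : E}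
    (hfa : HasSum f a) (hf : Summable fun i => ‖f i‖ ^ p) : ‖a‖ ^ p ≤ ∑' i, ‖f i‖ ^ p :=
  le_of_tendsto (hfa.norm.rpow_const (Or.inr hp0.le)) <| Eventually.of_forall fun s =>
    (norm_sum_rpow_le_sum_norm_rpow hp0 hp1 s f).trans <|
      hf.sum_le_tsum s fun i _ => Real.rpow_nonneg (norm_nonneg (f i)) p

lemma summable_of_summable_norm_rpow [CompleteSpace E] (hp0 : 0 < p) (hp1 : p ≤ 1) {f : ι → E}
    (hf : Summable fun i => ‖f i‖ ^ p) : Summable f := by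
  have hmem : Memℓp f (ENNReal.ofReal p) := by
    rwa [memℓp_gen_iff (by simpa [hp0.le]), ENNReal.toReal_ofReal hp0.le]
  have hmem_one : Memℓp f 1 := hmem.of_exponent_ge (by simpa)
  exact Summable.of_norm <| by simpa using (memℓp_gen_iff (by simp)).1 hmem_one

end RpowSubadditive

section LpQuasiNorm

variable {p c : ℝ} {f g : ℕ → ℝ} {m : ℕ}

lemma summable_of_lpMem (hp0 : 0 < p) (hp1 : p ≤ 1) (hf : lpMem p f) : Summable f :=
  summable_of_summable_norm_rpow hp0 hp1 hf

lemma lpMem_comp_add_right (hf : lpMem p f) (m : ℕ) : lpMem p fun k => f (k + m) :=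
  (summable_nat_add_iff m).2 hf

lemma lpMem_of_forall_ge_eq_zero (hp0 : 0 < p) (hf : ∀ j, m ≤ j → f j = 0) : lpMem p f :=
  summable_of_ne_finset_zero (s := range m) fun j hj => by
    simp [hf j (by simpa using hj), hp0.ne']

lemma tsum_abs_rpow_nonneg (p : ℝ) (f : ℕ → ℝ) : 0 ≤ ∑' n, |f n| ^ p :=
  tsum_nonneg fun n => Real.rpow_nonneg (abs_nonneg (f n)) p

lemma lpNrm_nonneg (p : ℝ) (f : ℕ → ℝ) : 0 ≤ lpNrm p f :=
  Real.rpow_nonneg (tsum_abs_rpow_nonneg p f) _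

lemma lpNrm_zero (hp0 : 0 < p) : lpNrm p 0 = 0 := by
  simp [lpNrm, hp0.ne']

lemma lpNrm_lt_iff (hp0 : 0 < p) (hc : 0 ≤ c) : lpNrm p f < c ↔ ∑' n, |f n| ^ p < c ^ p := by
  rw [lpNrm, one_div, Real.rpow_inv_lt_iff_of_pos (tsum_abs_rpow_nonneg p f) hc hp0]

lemma lpNrm_le_lpNrm (hp0 : 0 < p) (h : ∑' n, |f n| ^ p ≤ ∑' n, |g n| ^ p) :
    lpNrm p f ≤ lpNrm p g :=
  Real.rpow_le_rpow (tsum_abs_rpow_nonneg p f) h (by positivity)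

lemma abs_le_lpNrm {x : ℝ} (hp0 : 0 < p) (h : |x| ^ p ≤ ∑' n, |f n| ^ p) : |x| ≤ lpNrm p f := by
  rwa [lpNrm, one_div, Real.le_rpow_inv_iff_of_pos (abs_nonneg x) (tsum_abs_rpow_nonneg p f) hp0]

lemma abs_apply_le_lpNrm (hp0 : 0 < p) (hf : lpMem p f) (j : ℕ) : |f j| ≤ lpNrm p f :=
  abs_le_lpNrm hp0 <| hf.le_tsum j fun n _ => Real.rpow_nonneg (abs_nonneg (f n)) p

lemma lpNrm_eq_sum_range (hp0 : 0 < p) (hf : ∀ j, m ≤ j → f j = 0) :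
    lpNrm p f = (∑ j ∈ range m, |f j| ^ p) ^ (1 / p) := by
  rw [lpNrm, tsum_eq_sum (s := range m) fun j hj => by simp [hf j (by simpa using hj), hp0.ne']]

lemma lpNrm_le_of_abs_apply_le (hp0 : 0 < p) (hc : 0 ≤ c) (hf : ∀ j, m ≤ j → f j = 0)
    (hfc : ∀ j, |f j| ≤ c) : lpNrm p f ≤ (m : ℝ) ^ (1 / p) * c := by
  have hsum : ∑ j ∈ range m, |f j| ^ p ≤ m * c ^ p := by
    simpa using sum_le_card_nsmul (range m) _ _ fun j _ =>
      Real.rpow_le_rpow (abs_nonneg (f j)) (hfc j) hp0.le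
  calc lpNrm p f = (∑ j ∈ range m, |f j| ^ p) ^ (1 / p) := lpNrm_eq_sum_range hp0 hf
    _ ≤ (m * c ^ p) ^ (1 / p) := by gcongr
    _ = (m : ℝ) ^ (1 / p) * c := by
      rw [Real.mul_rpow m.cast_nonneg (by positivity), one_div, Real.rpow_rpow_inv hc hp0.ne']

end LpQuasiNorm

section TailSum

variable {p : ℝ} {f a : ℕ → ℝ} {m n : ℕ}

/-- The tail sum `∑_{k ≥ n} f k`, which is the `n`-th coordinate functional of the difference
system. -/
def tailSum (n : ℕ) (f : ℕ → ℝ) : ℝ := ∑' k, f (k + n)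

lemma tailSum_eq_add_tailSum_succ (hf : Summable f) (n : ℕ) :
    tailSum n f = f n + tailSum (n + 1) f := by
  rw [tailSum, ((summable_nat_add_iff n).2 hf).tsum_eq_zero_add]
  simp only [zero_add, tailSum, add_assoc, add_comm 1 n]

lemma tailSum_eq_zero (hf : ∀ j, m ≤ j → f j = 0) (hmn : m ≤ n) : tailSum n f = 0 := by
  simp [tailSum, fun k => hf (k + n) (by lia)]

lemma tailSum_sub_succ (ha : Tendsto a atTop (𝓝 0)) (hs : Summable fun j => a j - a (j + 1))
    (n : ℕ) : tailSum n (fun j => a j - a (j + 1)) = a n := by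
  have hpartial (N : ℕ) : ∑ k ∈ range N, (a (k + n) - a (k + n + 1)) = a n - a (N + n) := by
    simpa [add_right_comm] using sum_range_sub' (fun k => a (k + n)) N
  have hlim : Tendsto (fun N => a n - a (N + n)) atTop (𝓝 (a n - 0)) :=
    ((tendsto_add_atTop_iff_nat n).2 ha).const_sub (a n)
  rw [sub_zero] at hlim
  exact tendsto_nhds_unique
    (((summable_nat_add_iff n).2 hs).hasSum.tendsto_sum_nat.congr hpartial) hlim

lemma abs_tailSum_rpow_le (hp0 : 0 < p) (hp1 : p ≤ 1) (hf : lpMem p f) (n : ℕ) :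
    |tailSum n f| ^ p ≤ ∑' k, |f (k + n)| ^ p :=
  have hfn : lpMem p fun k => f (k + n) := lpMem_comp_add_right hf n
  norm_rpow_le_tsum_of_hasSum hp0 hp1 (summable_of_lpMem hp0 hp1 hfn).hasSum hfn

lemma abs_tailSum_rpow_add_sum_range_le (hp0 : 0 < p) (hp1 : p ≤ 1) (hf : lpMem p f) (m : ℕ) :
    |tailSum m f| ^ p + ∑ n ∈ range m, |f n| ^ p ≤ ∑' n, |f n| ^ p := by
  rw [← hf.sum_add_tsum_nat_add m, add_comm]
  gcongr
  exact abs_tailSum_rpow_le hp0 hp1 hf m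

lemma abs_tailSum_le_lpNrm (hp0 : 0 < p) (hp1 : p ≤ 1) (hf : lpMem p f) (n : ℕ) :
    |tailSum n f| ≤ lpNrm p f :=
  abs_le_lpNrm hp0 <| (le_add_of_nonneg_right (sum_nonneg fun _ _ => by positivity)).trans
    (abs_tailSum_rpow_add_sum_range_le hp0 hp1 hf n)

end TailSum

section DifferenceSystem

variable {p : ℝ}

lemma dvec_apply (n j : ℕ) : dvec n j = unitVec n j - unitVec n (j + 1) := by
  cases n <;> simp [dvec, unitVec]

lemma dvec_succ (n : ℕ) : dvec (n + 1) = unitVec (n + 1) - unitVec n := by simp [dvec]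

lemma sum_range_succ_dvec (n : ℕ) : ∑ k ∈ range (n + 1), dvec k = unitVec n := by
  induction n with
  | zero => simp [dvec]
  | succ n ih => rw [sum_range_succ, ih, dvec_succ, add_sub_cancel]

lemma lpNrm_unitVec (hp0 : 0 < p) (n : ℕ) : lpNrm p (unitVec n) = 1 := by
  rw [lpNrm, tsum_eq_single n fun j hj => by simp [unitVec, hj, hp0.ne']]
  simp [unitVec]

lemma lpNrm_dvec_succ (hp0 : 0 < p) (n : ℕ) : lpNrm p (dvec (n + 1)) = 2 ^ (1 / p) := by
  have hne : n + 1 ≠ n := n.succ_ne_self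
  rw [lpNrm, tsum_eq_sum (s := {n + 1, n}), sum_pair hne]
  · norm_num [dvec_succ, unitVec]
  · intro j hj
    simp only [mem_insert, mem_singleton, not_or] at hj
    simp [dvec_succ, unitVec, hj, hp0.ne']

lemma span_dvec_image_Iio (N : ℕ) :
    Submodule.span ℝ (dvec '' Set.Iio N) = Submodule.span ℝ (unitVec '' Set.Iio N) := by
  apply Submodule.span_eq_span <;> rintro _ ⟨n, hn, rfl⟩
  · rcases n with _ | n
    · exact Submodule.subset_span ⟨0, hn, by simp [dvec]⟩
    · rw [dvec_succ]
      exact Submodule.sub_mem _ (Submodule.subset_span ⟨n + 1, hn, rfl⟩)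
        (Submodule.subset_span ⟨n, n.lt_succ_self.trans hn, rfl⟩)
  · rw [← sum_range_succ_dvec]
    exact Submodule.sum_mem _ fun k hk => Submodule.subset_span
      ⟨k, (mem_range_succ_iff.1 hk).trans_lt hn, rfl⟩

lemma sum_smul_dvec_apply (A : Finset ℕ) (a : ℕ → ℝ) (j : ℕ) :
    (∑ n ∈ A, a n • dvec n) j =
      (if j ∈ A then a j else 0) - (if j + 1 ∈ A then a (j + 1) else 0) := by
  simp [dvec_apply, mul_sub, sum_sub_distrib, unitVec]

lemma sum_smul_dvec_apply_eq_zero {A : Finset ℕ} {m j : ℕ} (hA : A ⊆ range m) (a : ℕ → ℝ)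
    (hj : m ≤ j) : (∑ n ∈ A, a n • dvec n) j = 0 := by
  have hmem (k : ℕ) (hk : m ≤ k) : k ∉ A := fun h => (mem_range.1 (hA h)).not_ge hk
  rw [sum_smul_dvec_apply, if_neg (hmem j hj), if_neg (hmem (j + 1) (by lia)), sub_zero]

lemma lpMem_sum_smul_dvec (hp0 : 0 < p) (A : Finset ℕ) (a : ℕ → ℝ) :
    lpMem p (∑ n ∈ A, a n • dvec n) := by
  obtain ⟨m, hm⟩ := A.exists_nat_subset_range
  exact lpMem_of_forall_ge_eq_zero hp0 fun j hj => sum_smul_dvec_apply_eq_zero hm a hj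

lemma tailSum_sum_smul_dvec (A : Finset ℕ) (a : ℕ → ℝ) (n : ℕ) :
    tailSum n (∑ k ∈ A, a k • dvec k) = if n ∈ A then a n else 0 := by
  obtain ⟨m, hm⟩ := A.exists_nat_subset_range
  have hlim : Tendsto (fun j => if j ∈ A then a j else 0) atTop (𝓝 0) :=
    tendsto_atTop_of_eventually_const fun j hj =>
      if_neg fun h => (mem_range.1 (hm h)).not_ge hj
  have hsum := summable_of_lpMem one_pos le_rfl (lpMem_sum_smul_dvec one_pos A a)
  rw [funext (sum_smul_dvec_apply A a)] at hsum ⊢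
  exact tailSum_sub_succ hlim hsum n

end DifferenceSystem

section CoordinateProjections

variable {p : ℝ} {f : ℕ → ℝ} {m : ℕ}

/-- The coordinate projection `S_A` of the difference system. It does not depend on `p`, so it is
stated without reference to the basis `dBasis` of a particular `ℓ_p`. -/
def dproj (A : Finset ℕ) (f : ℕ → ℝ) : ℕ → ℝ := ∑ n ∈ A, tailSum n f • dvec n

lemma dproj_apply (A : Finset ℕ) (f : ℕ → ℝ) (j : ℕ) :
    dproj A f j =
      (if j ∈ A then tailSum j f else 0) - (if j + 1 ∈ A then tailSum (j + 1) f else 0) :=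
  sum_smul_dvec_apply A (fun n => tailSum n f) j

lemma dproj_sum_smul_dvec {A B : Finset ℕ} (hAB : A ⊆ B) (a : ℕ → ℝ) :
    dproj A (∑ n ∈ B, a n • dvec n) = ∑ n ∈ A, a n • dvec n :=
  sum_congr rfl fun n hn => by rw [tailSum_sum_smul_dvec, if_pos (hAB hn)]

lemma dproj_apply_eq_zero (hf : ∀ j, m ≤ j → f j = 0) (A : Finset ℕ) {j : ℕ} (hj : m ≤ j) :
    dproj A f j = 0 := by
  simp [dproj_apply, tailSum_eq_zero hf hj, tailSum_eq_zero hf (hj.trans j.le_succ)]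

lemma dproj_range_succ_apply (hf : Summable f) (m j : ℕ) :
    dproj (range (m + 1)) f j = if j < m then f j else if j = m then tailSum m f else 0 := by
  rw [dproj_apply]
  rcases lt_trichotomy j m with hjm | rfl | hmj
  · simp [hjm, hjm.le, tailSum_eq_add_tailSum_succ hf j]
  · simp
  · simp [hmj.not_gt, hmj.not_ge, hmj.ne', (hmj.trans j.lt_succ_self).not_ge]

lemma lpNrm_dproj_range_le (hp0 : 0 < p) (hp1 : p ≤ 1) (hf : lpMem p f) (m : ℕ) :
    lpNrm p (dproj (range m) f) ≤ lpNrm p f := by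
  rcases m with _ | m
  · simpa [dproj, lpNrm_zero hp0] using lpNrm_nonneg p f
  refine lpNrm_le_lpNrm hp0 ?_
  have happly := dproj_range_succ_apply (summable_of_lpMem hp0 hp1 hf) m
  calc ∑' j, |dproj (range (m + 1)) f j| ^ p
      = ∑ j ∈ range (m + 1), |dproj (range (m + 1)) f j| ^ p :=
        tsum_eq_sum fun j hj => by
          have hmj : m < j := by simpa using hj
          simp [happly, hmj.not_gt, hmj.ne', hp0.ne']
    _ = |tailSum m f| ^ p + ∑ j ∈ range m, |f j| ^ p := by
        rw [sum_range_succ, add_comm]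
        congr 1
        · simp [happly]
        · exact sum_congr rfl fun j hj => by rw [happly, if_pos (mem_range.1 hj)]
    _ ≤ ∑' j, |f j| ^ p := abs_tailSum_rpow_add_sum_range_le hp0 hp1 hf m

lemma tsum_abs_dproj_range_succ_sub_rpow_le (hp0 : 0 < p) (hp1 : p ≤ 1) (hf : lpMem p f) (m : ℕ) :
    ∑' j, |(dproj (range (m + 1)) f - f) j| ^ p ≤ 2 * ∑' k, |f (k + (m + 1))| ^ p := by
  set u := dproj (range (m + 1)) f - f with hu
  have happly := dproj_range_succ_apply (summable_of_lpMem hp0 hp1 hf) m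
  have hu_lt (j : ℕ) (hj : j < m) : u j = 0 := by simp [hu, happly, hj]
  have hu_eq : u m = tailSum (m + 1) f := by
    simp [hu, happly, tailSum_eq_add_tailSum_succ (summable_of_lpMem hp0 hp1 hf) m]
  have hu_gt (k : ℕ) : |u (k + (m + 1))| ^ p = |f (k + (m + 1))| ^ p := by
    simp [hu, happly, show ¬ k + (m + 1) < m by lia, show k + (m + 1) ≠ m by lia]
  have hu_mem : Summable fun j => |u j| ^ p :=
    (summable_nat_add_iff (m + 1)).1 <|
      (lpMem_comp_add_right hf (m + 1)).congr fun k => (hu_gt k).symm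
  calc ∑' j, |u j| ^ p
      = ∑ j ∈ range (m + 1), |u j| ^ p + ∑' k, |u (k + (m + 1))| ^ p :=
        (hu_mem.sum_add_tsum_nat_add (m + 1)).symm
    _ = |tailSum (m + 1) f| ^ p + ∑' k, |f (k + (m + 1))| ^ p := by
        rw [sum_range_succ, sum_eq_zero fun j hj => by simp [hu_lt j (mem_range.1 hj), hp0.ne'],
          hu_eq, zero_add, tsum_congr hu_gt]
    _ ≤ 2 * ∑' k, |f (k + (m + 1))| ^ p := by
        linarith [abs_tailSum_rpow_le hp0 hp1 hf (m + 1)]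

lemma qTendsto_dproj_range (hp0 : 0 < p) (hp1 : p ≤ 1) (hf : lpMem p f) :
    QTendsto (lpNrm p) (fun m => dproj (range m) f) f := by
  intro ε hε
  have htail := (tendsto_sum_nat_add fun j => |f j| ^ p).eventually_lt_const
    (half_pos (Real.rpow_pos_of_pos hε p))
  obtain ⟨N, hN⟩ := eventually_atTop.1 htail
  refine ⟨N + 1, fun n hn => (lpNrm_lt_iff hp0 hε.le).2 ?_⟩
  obtain ⟨m, rfl⟩ : ∃ m, n = m + 1 := ⟨n - 1, by lia⟩
  linarith [tsum_abs_dproj_range_succ_sub_rpow_le hp0 hp1 hf m, hN (m + 1) (by lia)]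

lemma abs_dproj_apply_le_lpNrm (hp0 : 0 < p) (hp1 : p ≤ 1) (hf : lpMem p f) (A : Finset ℕ)
    (j : ℕ) : |dproj A f j| ≤ lpNrm p f := by
  rw [dproj_apply]
  split_ifs
  · rw [tailSum_eq_add_tailSum_succ (summable_of_lpMem hp0 hp1 hf) j, add_sub_cancel_right]
    exact abs_apply_le_lpNrm hp0 hf j
  · simpa using abs_tailSum_le_lpNrm hp0 hp1 hf j
  · simpa using abs_tailSum_le_lpNrm hp0 hp1 hf (j + 1)
  · simpa using lpNrm_nonneg p f

lemma lpNrm_dproj_le (hp0 : 0 < p) (hp1 : p ≤ 1) (hf : ∀ j, m ≤ j → f j = 0) (A : Finset ℕ) :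
    lpNrm p (dproj A f) ≤ (m : ℝ) ^ (1 / p) * lpNrm p f :=
  lpNrm_le_of_abs_apply_le hp0 (lpNrm_nonneg p f) (fun _ => dproj_apply_eq_zero hf A)
    (abs_dproj_apply_le_lpNrm hp0 hp1 (lpMem_of_forall_ge_eq_zero hp0 hf) A)

end CoordinateProjections

section DifferenceBasis

variable {p : ℝ}

/-- The difference system as a Schauder basis of `ℓ_p`, `0 < p ≤ 1`, with the tail sums as its
coordinate functionals. -/
def dBasis (p : ℝ) (hp0 : 0 < p) (hp1 : p ≤ 1) : SchauderB (lpMem p) (lpNrm p) where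
  vec := dvec
  vec_mem n := by simpa using lpMem_sum_smul_dvec hp0 {n} 1
  coord := tailSum
  coord_add n f g hf hg :=
    ((summable_nat_add_iff n).2 (summable_of_lpMem hp0 hp1 hf)).tsum_add
      ((summable_nat_add_iff n).2 (summable_of_lpMem hp0 hp1 hg))
  coord_smul n a f _ := tsum_mul_left
  coord_bdd n := ⟨1, fun f hf => by simpa using abs_tailSum_le_lpNrm hp0 hp1 hf n⟩
  biorth m n := by simpa using tailSum_sum_smul_dvec {n} 1 m
  expansion _ hf := qTendsto_dproj_range hp0 hp1 hf

lemma semiNormalized_dBasis (hp0 : 0 < p) (hp1 : p ≤ 1) :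
    (dBasis p hp0 hp1).toBioSystem.SemiNormalized := by
  have htwo : (1 : ℝ) ≤ 2 ^ (1 / p) := Real.one_le_rpow one_le_two (by positivity)
  refine ⟨1, 2 ^ (1 / p), one_pos, fun n => ?_⟩
  change 1 ≤ lpNrm p (dvec n) ∧ lpNrm p (dvec n) ≤ 2 ^ (1 / p)
  rcases n with _ | n
  · have hzero : lpNrm p (dvec 0) = 1 := lpNrm_unitVec hp0 0
    exact ⟨hzero.ge, hzero.trans_le htwo⟩
  · exact ⟨htwo.trans_eq (lpNrm_dvec_succ hp0 n).symm, (lpNrm_dvec_succ hp0 n).le⟩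

lemma lpNrm_sum_range_dvec_le_one (hp0 : 0 < p) (m : ℕ) :
    lpNrm p (∑ n ∈ range m, dvec n) ≤ 1 := by
  rcases m with _ | m
  · simp [lpNrm_zero hp0]
  · rw [sum_range_succ_dvec, lpNrm_unitVec hp0]

/-- The indices `m - 1, m - 3, …` below `m`. -/
def alternateRange (m : ℕ) : Finset ℕ := {n ∈ range m | Odd (m + n)}

lemma alternateRange_subset_range (m : ℕ) : alternateRange m ⊆ range m := filter_subset _ _

lemma lpNrm_sum_alternateRange_dvec (hp0 : 0 < p) (m : ℕ) :
    lpNrm p (∑ n ∈ alternateRange m, dvec n) = (m : ℝ) ^ (1 / p) := by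
  have hsum : ∑ n ∈ alternateRange m, dvec n = ∑ n ∈ alternateRange m, (1 : ℝ) • dvec n := by simp
  have habs (j : ℕ) (hj : j < m) : |(∑ n ∈ alternateRange m, dvec n) j| = 1 := by
    rw [hsum, sum_smul_dvec_apply _ fun _ => 1]
    simp only [alternateRange, mem_filter, mem_range, Nat.odd_iff]
    split_ifs <;> first | lia | simp
  rw [lpNrm_eq_sum_range hp0 fun j hj => by
    rw [hsum, sum_smul_dvec_apply_eq_zero (alternateRange_subset_range m) (fun _ => 1) hj],
    sum_congr rfl fun j hj => by rw [habs j (mem_range.1 hj), Real.one_rpow]]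
  simp

lemma ktilde_dBasis (hp0 : 0 < p) (hp1 : p ≤ 1) (m : ℕ) :
    (dBasis p hp0 hp1).toBioSystem.ktilde m = (m : ℝ) ^ (1 / p) := by
  refine IsGreatest.csSup_eq ⟨⟨alternateRange m, 1, ?_, ?_⟩, ?_⟩
  · simpa [dBasis] using lpNrm_sum_range_dvec_le_one hp0 m
  · change _ = lpNrm p (dproj (alternateRange m) (∑ n ∈ range m, (1 : ℕ → ℝ) n • dvec n))
    rw [dproj_sum_smul_dvec (alternateRange_subset_range m)]
    simpa using (lpNrm_sum_alternateRange_dvec hp0 m).symm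
  · rintro _ ⟨A, a, ha, rfl⟩
    calc lpNrm p (dproj A (∑ n ∈ range m, a n • dvec n))
        ≤ (m : ℝ) ^ (1 / p) * lpNrm p (∑ n ∈ range m, a n • dvec n) :=
          lpNrm_dproj_le hp0 hp1 (fun _ => sum_smul_dvec_apply_eq_zero subset_rfl a) A
      _ ≤ (m : ℝ) ^ (1 / p) := mul_le_of_le_one_right (by positivity) ha

end DifferenceBasis

theorem statement12_general (p : ℝ) (hp0 : 0 < p) (hp1 : p ≤ 1) :
    (∃ b : SchauderB (lpMem p) (lpNrm p), b.vec = dvec ∧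
      b.toBioSystem.SemiNormalized ∧
      (∀ f : ℕ → ℝ, lpMem p f → ∀ m : ℕ,
        lpNrm p (∑ n ∈ range m, b.coord n f • dvec n) ≤ lpNrm p f) ∧
      (∀ N : ℕ, Submodule.span ℝ (dvec '' Set.Iio N) =
        Submodule.span ℝ (unitVec '' Set.Iio N)) ∧
      (∀ m : ℕ, b.toBioSystem.ktilde m = (m : ℝ) ^ (1 / p))) ∧
    (∀ a : ℕ → ℝ, Tendsto a atTop (𝓝 0) → lpMem p (fun n => a n - a (n + 1)) → ∀ m : ℕ,
      (|a m| ^ p + ∑ n ∈ range m, |a n - a (n + 1)| ^ p) ^ (1 / p) ≤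
        (∑' n : ℕ, |a n - a (n + 1)| ^ p) ^ (1 / p)) := by
  refine ⟨⟨dBasis p hp0 hp1, rfl, semiNormalized_dBasis hp0 hp1,
    fun f hf m => lpNrm_dproj_range_le hp0 hp1 hf m, span_dvec_image_Iio,
    ktilde_dBasis hp0 hp1⟩, fun a ha hmem m => ?_⟩
  have hbound := abs_tailSum_rpow_add_sum_range_le hp0 hp1 hmem m
  rw [tailSum_sub_succ ha (summable_of_lpMem hp0 hp1 hmem)] at hbound
  gcongr

theorem statement12 (p : ℝ) (hp0 : 0 < p) (hp1 : p < 1) :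
    (∃ b : SchauderB (lpMem p) (lpNrm p), b.vec = dvec ∧
      b.toBioSystem.SemiNormalized ∧
      (∀ f : ℕ → ℝ, lpMem p f → ∀ m : ℕ,
        lpNrm p (∑ n ∈ Finset.range m, b.coord n f • dvec n) ≤ lpNrm p f) ∧
      (∀ N : ℕ, Submodule.span ℝ (dvec '' Set.Iio N) =
        Submodule.span ℝ (unitVec '' Set.Iio N)) ∧
      (∀ m : ℕ, 1 ≤ m → b.toBioSystem.ktilde m = (m : ℝ) ^ (1 / p))) ∧
    (∀ a : ℕ → ℝ, (∃ N : ℕ, ∀ j, N ≤ j → a j = 0) → ∀ m : ℕ,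
      (|a m| ^ p + ∑ n ∈ Finset.range m, |a n - a (n + 1)| ^ p) ^ (1 / p) ≤
        (∑' n : ℕ, |a n - a (n + 1)| ^ p) ^ (1 / p)) := by
  obtain ⟨⟨b, hvec, hsemi, hmono, hspan, hktilde⟩, hineq⟩ := statement12_general p hp0 hp1.le
  exact ⟨⟨b, hvec, hsemi, hmono, hspan, fun m _ => hktilde m⟩, fun a ⟨N, hN⟩ =>
    hineq a (tendsto_atTop_of_eventually_const hN) <| lpMem_of_forall_ge_eq_zero hp0 fun j hj => by
      rw [hN j hj, hN (j + 1) (by lia), sub_zero]⟩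

end AGpaper
end
end

section
/- Let 𝒳=(x_j) be a semi-normalized Schauder basis of a quasi-Banach space 𝕏, let 𝕊 be a locally convex subsymmetric sequence space, and let σ=(σ_n) be an ordered partition of ℕ with N_n=|σ_n| and M_r=Σ_{n=1}^r N_n. Assume that the fundamental function Λ[𝕊] has both the lower regularity property and the upper regularity property, that M_r ≲ N_{r+1} for all r, and that 𝕊 satisfies an upper s-estimate for some s≥1 and a lower q-estimate for some q≤∞. Then there is a constant C such that for all r∈ℕ: k̃_r[𝒳,𝕏] ≤ k̃_{M_r}[ℰ,𝕐] ≤ C·max{ k̃_r[𝒳,𝕏], η_r[𝒳,𝕏,s], β_r[𝒳,𝕏,q] }, where ℰ is the unit vector system of 𝕐=𝕐[𝒳,𝕊,σ]. -/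
noncomputable section

open Classical
open scoped ENNReal NNReal

namespace AGpaper

/-! ### Biorthogonal systems and Schauder bases -/

variable {X : Type*} [AddCommGroup X] [Module ℝ X]

variable {mem : X → Prop} {nrm : X → ℝ}

/-- The parameter `η_r[𝒳,𝕏,s]`: the smallest constant `C` with
`(Σ_{n<r} |a_n|^s)^{1/s} ≤ C ‖Σ_{n<r} a_n x_n‖`. -/
def etaParam {X : Type*} [AddCommGroup X] [Module ℝ X] (B : QuasiBanach X)
    (b : QBasis B) (s : ℝ) (r : ℕ) : ℝ :=
  sInf {C : ℝ | 0 ≤ C ∧ ∀ a : ℕ → ℝ,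
    (∑ n ∈ Finset.range r, |a n| ^ s) ^ (1 / s) ≤
      C * B.q (∑ n ∈ Finset.range r, a n • b.vec n)}

/-- The parameter `β_r[𝒳,𝕏,q]`: the smallest constant `C` with
`‖Σ_{n<r} a_n x_n‖ ≤ C (Σ_{n<r} |a_n|^q)^{1/q}`. -/
def betaParam {X : Type*} [AddCommGroup X] [Module ℝ X] (B : QuasiBanach X)
    (b : QBasis B) (q : ℝ≥0∞) (r : ℕ) : ℝ :=
  sInf {C : ℝ | 0 ≤ C ∧ ∀ a : ℕ → ℝ,
    B.q (∑ n ∈ Finset.range r, a n • b.vec n) ≤ C * estNorm q (Finset.range r) a}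

/-!
For the lower inequality, the step functions `∑ aₙ vₙ` form an isometric copy of the span of `𝒳` in
`𝕐`, because `Q_σ` annihilates them, and on this copy `S_A` is the restriction to the union of the
blocks `σ_n`, `n ∈ A`.

For the upper inequality, `P_σ f` is an average of the functions obtained from `f` by rotating every
block cyclically. Such a rotation is increasing on each of two complementary sets, so
`‖P_σ‖ ≤ 2` on `𝕊`. Write `f = Q_σ f + P_σ f`.
* The upper `s`-estimate gives `‖P_σ f‖_𝕊 ≲ η_r ‖H f‖`, which controls `‖Q_σ (S_A f)‖_𝕊`.
* The lower `q`-estimate gives `‖H (S_A (Q_σ f))‖ ≲ β_r ‖Q_σ f‖_𝕊`.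
* `H (S_A (P_σ f))` arises from `H f` by the multiplier `|A ∩ σ_n| / |σ_n| ∈ [0, 1]`. Without a
  triangle inequality, such a multiplier `l` is bounded by a multiple of `k̃_r` by splitting
  `t * l` into integer and fractional parts, for `t` large compared with the quasi-norm constant.
-/

/-! ### Blocks of an ordered partition and their rotations -/

theorem eq_range_card_of_isLowerSet {T : Finset ℕ} (hT : IsLowerSet (T : Set ℕ)) :
    T = Finset.range T.card := by
  refine Finset.eq_of_subset_of_card_le (fun j hj => ?_) (Finset.card_range _).le
  have hsub : Finset.range (j + 1) ⊆ T := fun i hi =>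
    hT (Nat.lt_succ_iff.1 (Finset.mem_range.1 hi)) hj
  simpa [Nat.succ_le_iff] using Finset.card_le_card hsub

theorem sum_range_add_mod {M : Type*} [AddCommMonoid M] (F : ℕ → M) (N i : ℕ) :
    ∑ k ∈ Finset.range N, F ((i + k) % N) = ∑ k ∈ Finset.range N, F k := by
  have hmod := congrArg (fun t => (t.map F).sum) (Nat.multiset_Ico_map_mod i N)
  simp only [Multiset.map_map] at hmod
  calc ∑ k ∈ Finset.range N, F ((i + k) % N)
      = ∑ m ∈ Finset.Ico i (i + N), F (m % N) := by simp [Finset.sum_Ico_eq_sum_range]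
    _ = ∑ k ∈ Finset.range N, F k := hmod

theorem sum_range_mul_add_mod {M : Type*} [AddCommMonoid M] (F : ℕ → M) (N t i : ℕ) :
    ∑ k ∈ Finset.range (N * t), F ((i + k) % N) = t • ∑ k ∈ Finset.range N, F k := by
  induction t with
  | zero => simp
  | succ t ih =>
    have hperiod : ∀ k, (i + (N * t + k)) % N = (i + k) % N := fun k => by
      rw [show i + (N * t + k) = i + k + N * t by ring, Nat.add_mul_mod_self_left]
    simp only [Nat.mul_succ, Finset.sum_range_add, ih, hperiod, sum_range_add_mod, succ_nsmul]

namespace OrderedPartition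

variable (σ : OrderedPartition) {f : ℕ → ℝ} {r : ℕ}

theorem lt_of_mem_part {n m i j : ℕ} (hnm : n < m) (hi : i ∈ σ.part n) (hj : j ∈ σ.part m) :
    i < j := by
  induction m, hnm using Nat.le_induction generalizing j with
  | base => exact σ.ordered n i hi j hj
  | succ m _ ih =>
    obtain ⟨l, hl⟩ := σ.nonempty m
    exact (ih hl).trans (σ.ordered m l hl j hj)

/-- The index of the block of `σ` containing `j`. -/
def blockIdx (j : ℕ) : ℕ := (σ.covers j).choose

theorem mem_part_blockIdx (j : ℕ) : j ∈ σ.part (σ.blockIdx j) := (σ.covers j).choose_spec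

theorem mem_part_iff {n j : ℕ} : j ∈ σ.part n ↔ σ.blockIdx j = n := by
  refine ⟨fun hj => ?_, fun h => h ▸ σ.mem_part_blockIdx j⟩
  rcases lt_trichotomy (σ.blockIdx j) n with h | h | h
  · exact absurd (σ.lt_of_mem_part h (σ.mem_part_blockIdx j) hj) (lt_irrefl j)
  · exact h
  · exact absurd (σ.lt_of_mem_part h hj (σ.mem_part_blockIdx j)) (lt_irrefl j)

theorem monotone_blockIdx : Monotone σ.blockIdx := fun i j hij =>
  not_lt.1 fun h =>
    hij.not_gt (σ.lt_of_mem_part h (σ.mem_part_blockIdx j) (σ.mem_part_blockIdx i))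

theorem blockIdx_lt_iff {n j : ℕ} : σ.blockIdx j < n ↔ j < σ.M n := by
  have hmem : ∀ i, i ∈ (Finset.range n).biUnion σ.part ↔ σ.blockIdx i < n := fun i => by
    simp [mem_part_iff]
  have hcard : ((Finset.range n).biUnion σ.part).card = σ.M n :=
    Finset.card_biUnion fun a _ b _ hab => Finset.disjoint_left.2 fun i hia hib =>
      hab ((σ.mem_part_iff.1 hia).symm.trans (σ.mem_part_iff.1 hib))
  have hlower : IsLowerSet ((Finset.range n).biUnion σ.part : Set ℕ) := fun a b hba ha =>
    (hmem b).2 ((σ.monotone_blockIdx hba).trans_lt ((hmem a).1 ha))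
  rw [← hmem, eq_range_card_of_isLowerSet hlower, hcard, Finset.mem_range]

theorem M_succ (n : ℕ) : σ.M (n + 1) = σ.M n + σ.N n := Finset.sum_range_succ _ _

theorem N_pos (n : ℕ) : 0 < σ.N n := (σ.nonempty n).card_pos

theorem part_eq_Ico (n : ℕ) : σ.part n = Finset.Ico (σ.M n) (σ.M (n + 1)) := by
  ext j
  rw [mem_part_iff, Finset.mem_Ico, ← not_lt, ← blockIdx_lt_iff, ← blockIdx_lt_iff]
  omega

theorem blockIdx_M_add {n k : ℕ} (hk : k < σ.N n) : σ.blockIdx (σ.M n + k) = n := by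
  rw [← mem_part_iff, part_eq_Ico, Finset.mem_Ico, M_succ]
  omega

theorem exists_eq_M_add (j : ℕ) :
    ∃ k < σ.N (σ.blockIdx j), j = σ.M (σ.blockIdx j) + k := by
  have hj := σ.mem_part_blockIdx j
  rw [part_eq_Ico, Finset.mem_Ico, M_succ] at hj
  exact ⟨j - σ.M (σ.blockIdx j), by omega, by omega⟩

theorem sum_part (f : ℕ → ℝ) (n : ℕ) :
    ∑ i ∈ σ.part n, f i = ∑ k ∈ Finset.range (σ.N n), f (σ.M n + k) := by
  rw [part_eq_Ico, Finset.sum_Ico_eq_sum_range, M_succ, Nat.add_sub_cancel_left]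

theorem sum_part_eq_zero (hf : f.support ⊆ Set.Iio (σ.M r)) {n : ℕ} (hn : r ≤ n) :
    ∑ i ∈ σ.part n, f i = 0 :=
  Finset.sum_eq_zero fun i hi => Function.notMem_support.1 fun hfi =>
    absurd (σ.blockIdx_lt_iff.2 (hf hfi)) (by rw [σ.mem_part_iff.1 hi]; omega)

theorem sum_indicator_part (hf : f.support ⊆ Set.Iio (σ.M r)) :
    ∑ n ∈ Finset.range r, (σ.part n : Set ℕ).indicator f = f := by
  ext j
  have hterm : ∀ n, (σ.part n : Set ℕ).indicator f j = if n = σ.blockIdx j then f j else 0 :=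
    fun n => by simp [Set.indicator_apply, mem_part_iff, eq_comm]
  rw [Finset.sum_apply, Finset.sum_congr rfl fun n _ => hterm n, Finset.sum_ite_eq']
  simp only [Finset.mem_range, blockIdx_lt_iff, ite_eq_left_iff]
  exact fun hj => (Function.notMem_support.1 fun hfj => hj (hf hfj)).symm

theorem Pavg_apply (f : ℕ → ℝ) (j : ℕ) :
    σ.Pavg f j = (∑ i ∈ σ.part (σ.blockIdx j), f i) / σ.N (σ.blockIdx j) :=
  dif_pos (σ.covers j)

theorem support_Pavg_subset (hf : f.support ⊆ Set.Iio (σ.M r)) :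
    (σ.Pavg f).support ⊆ Set.Iio (σ.M r) := fun j hj => by
  by_contra hjr
  rw [Set.mem_Iio, ← blockIdx_lt_iff, not_lt] at hjr
  exact hj (by rw [Pavg_apply, σ.sum_part_eq_zero hf hjr, zero_div])

theorem support_Qavg_subset (hf : f.support ⊆ Set.Iio (σ.M r)) :
    (σ.Qavg f).support ⊆ Set.Iio (σ.M r) :=
  (Function.support_sub _ _).trans (Set.union_subset hf (σ.support_Pavg_subset hf))

/-- The permutation of `ℕ` that rotates each block of `σ` cyclically by `k` places. Averaging
`f ∘ σ.rotate k` over `k` gives `σ.Pavg f`. -/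
def rotate (k j : ℕ) : ℕ :=
  σ.M (σ.blockIdx j) + (j - σ.M (σ.blockIdx j) + k) % σ.N (σ.blockIdx j)

theorem rotate_M_add {n i : ℕ} (k : ℕ) (hi : i < σ.N n) :
    σ.rotate k (σ.M n + i) = σ.M n + (i + k) % σ.N n := by
  rw [rotate, σ.blockIdx_M_add hi, Nat.add_sub_cancel_left]

theorem blockIdx_rotate (k j : ℕ) : σ.blockIdx (σ.rotate k j) = σ.blockIdx j :=
  σ.blockIdx_M_add (Nat.mod_lt _ (σ.N_pos _))

theorem support_comp_rotate_subset (k : ℕ) (hf : f.support ⊆ Set.Iio (σ.M r)) :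
    (f ∘ σ.rotate k).support ⊆ Set.Iio (σ.M r) := fun j hj => by
  have hj' : σ.rotate k j ∈ Set.Iio (σ.M r) := hf hj
  rwa [Set.mem_Iio, ← blockIdx_lt_iff, blockIdx_rotate, blockIdx_lt_iff] at hj'

theorem sum_comp_rotate (f : ℕ → ℝ) {L j : ℕ} (hL : σ.N (σ.blockIdx j) ∣ L) :
    ∑ k ∈ Finset.range L, f (σ.rotate k j) = L * σ.Pavg f j := by
  obtain ⟨t, rfl⟩ := hL
  have hN : (σ.N (σ.blockIdx j) : ℝ) ≠ 0 := Nat.cast_ne_zero.2 (σ.N_pos _).ne'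
  simp only [rotate, Pavg_apply, sum_part,
    sum_range_mul_add_mod fun k => f (σ.M (σ.blockIdx j) + k), nsmul_eq_mul]
  push_cast
  field_simp

-- Within a block, `σ.rotate k` shifts an initial segment up and the rest down.
theorem rotate_lt_rotate {k i j : ℕ} (hij : i < j)
    (h : i ≤ σ.rotate k i ↔ j ≤ σ.rotate k j) : σ.rotate k i < σ.rotate k j := by
  rcases (σ.monotone_blockIdx hij.le).lt_or_eq with hblock | hblock
  · rw [← σ.blockIdx_rotate k i, ← σ.blockIdx_rotate k j] at hblock
    exact σ.monotone_blockIdx.reflect_lt hblock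
  obtain ⟨a, ha, hia⟩ := σ.exists_eq_M_add i
  obtain ⟨b, hb, hjb⟩ := σ.exists_eq_M_add j
  rw [← hblock] at hb hjb
  have hk := Nat.mod_lt k (σ.N_pos (σ.blockIdx i))
  rw [hia, hjb, σ.rotate_M_add k ha, σ.rotate_M_add k hb, Nat.add_mod_eq_ite, Nat.add_mod_eq_ite,
    Nat.mod_eq_of_lt ha, Nat.mod_eq_of_lt hb] at h ⊢
  split_ifs at h ⊢ <;> omega

theorem strictMonoOn_rotate (k : ℕ) : StrictMonoOn (σ.rotate k) {j | j ≤ σ.rotate k j} :=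
  fun _ hi _ hj hij => σ.rotate_lt_rotate hij (iff_of_true hi hj)

theorem strictMonoOn_rotate_compl (k : ℕ) :
    StrictMonoOn (σ.rotate k) {j | j ≤ σ.rotate k j}ᶜ :=
  fun _ hi _ hj hij => σ.rotate_lt_rotate hij (iff_of_false hi hj)

end OrderedPartition

/-! ### Restriction and rearrangement in subsymmetric spaces -/

theorem support_indicator_subset_of_subset {α M : Type*} [Zero M] {f : α → M} {A T : Set α}
    (hf : f.support ⊆ T) : (A.indicator f).support ⊆ T :=
  (Set.support_indicator.trans_subset Set.inter_subset_right).trans hf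

theorem sum_smul_unitVec (T : Finset ℕ) (f : ℕ → ℝ) :
    ∑ j ∈ T, f j • unitVec j = (T : Set ℕ).indicator f := by
  ext i
  simp [unitVec, Set.indicator_apply, Finset.sum_apply]

theorem spread_apply {φ : ℕ → ℕ} (hφ : φ.Injective) (ε f : ℕ → ℝ) (n : ℕ) :
    spread φ ε f (φ n) = ε n * f n := by
  have h : ∃ m, φ m = φ n := ⟨n, rfl⟩
  rw [spread, dif_pos h, hφ h.choose_spec]

theorem spread_one_sum_smul_unitVec {φ : ℕ → ℕ} (hφ : φ.Injective) (T : Finset ℕ)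
    (g : ℕ → ℕ) (a : ℕ → ℝ) :
    spread φ 1 (∑ j ∈ T, a j • unitVec (g j)) = ∑ j ∈ T, a j • unitVec (φ (g j)) := by
  ext y
  by_cases hy : ∃ n, φ n = y
  · obtain ⟨n, rfl⟩ := hy
    simp [spread_apply hφ, unitVec, hφ.eq_iff]
  · have hne : ∀ j, y ≠ φ (g j) := fun j h => hy ⟨g j, h.symm⟩
    simp [spread, hy, unitVec, hne]

namespace SubsymmetricSpace

variable {S : SubsymmetricSpace} {f g : ℕ → ℝ}

theorem mem_sum {ι : Type*} {J : Finset ι} {F : ι → ℕ → ℝ} (hF : ∀ i ∈ J, S.mem (F i)) :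
    S.mem (∑ i ∈ J, F i) :=
  Finset.sum_induction F S.mem (fun _ _ => S.add_mem) S.zero_mem hF

theorem mem_of_finite_support (hf : f.support.Finite) : S.mem f := by
  have hsum := sum_smul_unitVec hf.toFinset f
  rw [hf.coe_toFinset, Set.indicator_support] at hsum
  exact hsum ▸ mem_sum fun j _ => S.smul_mem _ (S.unit_mem j)

theorem mem_of_support_subset_Iio {m : ℕ} (hf : f.support ⊆ Set.Iio m) : S.mem f :=
  mem_of_finite_support ((Set.finite_Iio m).subset hf)

theorem nrm_sum_le {ι : Type*} {J : Finset ι} {F : ι → ℕ → ℝ} (hF : ∀ i ∈ J, S.mem (F i)) :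
    S.nrm (∑ i ∈ J, F i) ≤ ∑ i ∈ J, S.nrm (F i) :=
  Finset.le_sum_of_subadditive_on_pred S.nrm S.mem ((S.nrm_eq_zero S.zero_mem).2 rfl).le
    (fun _ _ => S.nrm_triangle) (fun _ _ => S.add_mem) F hF

theorem nrm_sub_le (hf : S.mem f) (hg : S.mem g) : S.nrm (f - g) ≤ S.nrm f + S.nrm g := by
  have hneg : S.nrm ((-1 : ℝ) • g) = S.nrm g := by rw [S.nrm_smul]; norm_num
  rw [sub_eq_add_neg, ← neg_one_smul ℝ g, ← hneg]
  exact S.nrm_triangle hf (S.smul_mem _ hg)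

theorem mem_mul_and_nrm_mul_of_abs_eq_one (hf : S.mem f) {ε : ℕ → ℝ} (hε : ∀ n, |ε n| = 1) :
    S.mem (ε * f) ∧ S.nrm (ε * f) = S.nrm f := by
  have hspread : spread id ε f = ε * f := funext (spread_apply Function.injective_id ε f)
  exact hspread ▸ S.subsym hf ε hε id strictMono_id

theorem nrm_indicator_le (hf : S.mem f) (A : Set ℕ) : S.nrm (A.indicator f) ≤ S.nrm f := by
  set ε : ℕ → ℝ := fun n => if n ∈ A then 1 else -1 with hε
  obtain ⟨hmem, hnrm⟩ := mem_mul_and_nrm_mul_of_abs_eq_one hf (ε := ε) fun n => by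
    simp only [hε]
    split_ifs <;> simp
  have hmean : A.indicator f = (1 / 2 : ℝ) • (f + ε * f) := by
    ext n
    by_cases hn : n ∈ A <;> simp [hε, hn]
    ring
  rw [hmean, S.nrm_smul, abs_of_pos one_half_pos]
  linarith [S.nrm_triangle hf hmem]

theorem nrm_sum_unitVec_comp_strictMono {φ : ℕ → ℕ} (hφ : StrictMono φ) (T : Finset ℕ)
    (g : ℕ → ℕ) (a : ℕ → ℝ) :
    S.nrm (∑ j ∈ T, a j • unitVec (φ (g j))) = S.nrm (∑ j ∈ T, a j • unitVec (g j)) := by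
  rw [← spread_one_sum_smul_unitVec hφ.injective]
  exact (S.subsym (mem_sum fun j _ => S.smul_mem _ (S.unit_mem _)) 1
    (fun _ => abs_one) φ hφ).2

-- `ψ` need not extend to a strictly increasing map on `ℕ`, but there are strictly increasing maps
-- `φ₁` and `φ₂` on `ℕ` such that `φ₁ = φ₂ ∘ ψ` on `T`.
theorem nrm_sum_unitVec_comp {T : Finset ℕ} {ψ : ℕ → ℕ} (hψ : StrictMonoOn ψ T) (a : ℕ → ℝ) :
    S.nrm (∑ j ∈ T, a j • unitVec (ψ j)) = S.nrm (∑ j ∈ T, a j • unitVec j) := by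
  set φ₁ : ℕ → ℕ := fun x => x + (T.filter (· ≤ x)).sup ψ with hφ₁_def
  set φ₂ : ℕ → ℕ := fun x => x + (T.filter (ψ · ≤ x)).sup id with hφ₂_def
  have hφ₁ : StrictMono φ₁ := fun x y hxy => add_lt_add_of_lt_of_le hxy <|
    Finset.sup_mono <| Finset.monotone_filter_right T fun _ _ h => h.trans hxy.le
  have hφ₂ : StrictMono φ₂ := fun x y hxy => add_lt_add_of_lt_of_le hxy <|
    Finset.sup_mono <| Finset.monotone_filter_right T fun _ _ h => h.trans hxy.le
  have heq : ∀ j ∈ T, φ₂ (ψ j) = φ₁ j := fun j hj => by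
    have h₁ : (T.filter (· ≤ j)).sup ψ = ψ j := le_antisymm
      (Finset.sup_le fun i hi => (hψ.le_iff_le (Finset.mem_filter.1 hi).1 hj).2
        (Finset.mem_filter.1 hi).2)
      (Finset.le_sup (Finset.mem_filter.2 ⟨hj, le_rfl⟩))
    have h₂ : (T.filter (ψ · ≤ ψ j)).sup id = j := le_antisymm
      (Finset.sup_le fun i hi => (hψ.le_iff_le (Finset.mem_filter.1 hi).1 hj).1
        (Finset.mem_filter.1 hi).2)
      (Finset.le_sup (f := id) (Finset.mem_filter.2 ⟨hj, le_rfl⟩))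
    simp only [hφ₁_def, hφ₂_def, h₁, h₂, add_comm]
  calc S.nrm (∑ j ∈ T, a j • unitVec (ψ j))
      = S.nrm (∑ j ∈ T, a j • unitVec (φ₂ (ψ j))) :=
        (nrm_sum_unitVec_comp_strictMono hφ₂ T ψ a).symm
    _ = S.nrm (∑ j ∈ T, a j • unitVec (φ₁ j)) := by
        rw [Finset.sum_congr rfl fun j hj => by rw [heq j hj]]
    _ = S.nrm (∑ j ∈ T, a j • unitVec j) := nrm_sum_unitVec_comp_strictMono hφ₁ T id a

theorem nrm_indicator_image {T : Finset ℕ} {ψ : ℕ → ℕ} (hψ : StrictMonoOn ψ T) (f : ℕ → ℝ) :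
    S.nrm ((ψ '' T).indicator f) = S.nrm ((T : Set ℕ).indicator (f ∘ ψ)) := by
  rw [← Finset.coe_image, ← sum_smul_unitVec, Finset.sum_image hψ.injOn, ← sum_smul_unitVec]
  exact nrm_sum_unitVec_comp hψ (f ∘ ψ)

theorem nrm_indicator_comp_le {E : Set ℕ} {ρ : ℕ → ℕ} (hρ : StrictMonoOn ρ E)
    (hf : f.support.Finite) : S.nrm (E.indicator (f ∘ ρ)) ≤ S.nrm f := by
  have hfin : (E ∩ ρ ⁻¹' f.support).Finite :=
    Set.Finite.of_finite_image (hf.subset (by rintro _ ⟨j, hj, rfl⟩; exact hj.2))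
      (hρ.injOn.mono Set.inter_subset_left)
  have hrestrict : E.indicator (f ∘ ρ) = (hfin.toFinset : Set ℕ).indicator (f ∘ ρ) := by
    rw [hfin.coe_toFinset, ← Set.indicator_indicator]
    exact congrArg E.indicator (Set.indicator_support (f := f ∘ ρ)).symm
  have hmono : StrictMonoOn ρ hfin.toFinset :=
    hρ.mono (hfin.coe_toFinset.subset.trans Set.inter_subset_left)
  rw [hrestrict, ← nrm_indicator_image hmono]
  exact nrm_indicator_le (mem_of_finite_support hf) _

theorem nrm_indicator_one (S : SubsymmetricSpace) (T : Finset ℕ) :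
    S.nrm ((T : Set ℕ).indicator 1) = S.Lam T.card := by
  have hfin : {j | j ∈ T}.Finite := T.finite_toSet
  have hcard : hfin.toFinset.card = T.card := by simp
  have himage : Nat.nth (· ∈ T) '' (Finset.range T.card : Set ℕ) = T := by
    rw [Finset.coe_range, ← hcard, Nat.image_nth_Iio_card hfin]
    rfl
  have hmono : StrictMonoOn (Nat.nth (· ∈ T)) (Finset.range T.card : Set ℕ) := by
    rw [Finset.coe_range, ← hcard]
    exact Nat.nth_strictMonoOn hfin
  rw [← himage, nrm_indicator_image hmono, Lam]
  congr 1
  ext j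
  simp [indic, Set.indicator_apply]

/-! ### The averaging projection -/

variable {σ : OrderedPartition} {r : ℕ}

theorem nrm_comp_rotate_le (hf : f.support ⊆ Set.Iio (σ.M r)) (k : ℕ) :
    S.nrm (f ∘ σ.rotate k) ≤ 2 * S.nrm f := by
  set E : Set ℕ := {j | j ≤ σ.rotate k j}
  have hfin : f.support.Finite := (Set.finite_Iio _).subset hf
  have hmem (A : Set ℕ) : S.mem (A.indicator (f ∘ σ.rotate k)) :=
    mem_of_support_subset_Iio
      (support_indicator_subset_of_subset (σ.support_comp_rotate_subset k hf))
  calc S.nrm (f ∘ σ.rotate k)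
      = S.nrm (E.indicator (f ∘ σ.rotate k) + Eᶜ.indicator (f ∘ σ.rotate k)) := by
        rw [Set.indicator_self_add_compl]
    _ ≤ S.nrm (E.indicator (f ∘ σ.rotate k)) + S.nrm (Eᶜ.indicator (f ∘ σ.rotate k)) :=
        S.nrm_triangle (hmem E) (hmem Eᶜ)
    _ ≤ S.nrm f + S.nrm f := add_le_add
        (nrm_indicator_comp_le (σ.strictMonoOn_rotate k) hfin)
        (nrm_indicator_comp_le (σ.strictMonoOn_rotate_compl k) hfin)
    _ = 2 * S.nrm f := (two_mul _).symm

theorem nrm_Pavg_le (hf : f.support ⊆ Set.Iio (σ.M r)) : S.nrm (σ.Pavg f) ≤ 2 * S.nrm f := by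
  set L := ∏ n ∈ Finset.range r, σ.N n
  have hL : (0 : ℝ) < L := Nat.cast_pos.2 (Finset.prod_pos fun n _ => σ.N_pos n)
  have hmean : ∑ k ∈ Finset.range L, f ∘ σ.rotate k = (L : ℝ) • σ.Pavg f := by
    ext j
    rw [Finset.sum_apply, Pi.smul_apply, smul_eq_mul]
    by_cases hj : σ.blockIdx j < r
    · exact σ.sum_comp_rotate f (Finset.dvd_prod_of_mem _ (Finset.mem_range.2 hj))
    have houtside : ∀ g : ℕ → ℝ, g.support ⊆ Set.Iio (σ.M r) → g j = 0 := fun g hg =>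
      Function.notMem_support.1 fun hgj => hj (σ.blockIdx_lt_iff.2 (hg hgj))
    rw [houtside _ (σ.support_Pavg_subset hf), mul_zero]
    exact Finset.sum_eq_zero fun k _ => houtside _ (σ.support_comp_rotate_subset k hf)
  have hmem (k : ℕ) : S.mem (f ∘ σ.rotate k) :=
    mem_of_support_subset_Iio (σ.support_comp_rotate_subset k hf)
  refine le_of_mul_le_mul_left ?_ hL
  calc (L : ℝ) * S.nrm (σ.Pavg f)
      = S.nrm (∑ k ∈ Finset.range L, f ∘ σ.rotate k) := by
        rw [hmean, S.nrm_smul, abs_of_pos hL]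
    _ ≤ ∑ k ∈ Finset.range L, S.nrm (f ∘ σ.rotate k) := nrm_sum_le fun k _ => hmem k
    _ ≤ ∑ _k ∈ Finset.range L, 2 * S.nrm f :=
        Finset.sum_le_sum fun k _ => nrm_comp_rotate_le hf k
    _ = L * (2 * S.nrm f) := by simp

theorem nrm_Qavg_le (hf : f.support ⊆ Set.Iio (σ.M r)) : S.nrm (σ.Qavg f) ≤ 3 * S.nrm f := by
  have hsub : S.nrm (σ.Qavg f) ≤ S.nrm f + S.nrm (σ.Pavg f) :=
    nrm_sub_le (mem_of_support_subset_Iio hf)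
      (mem_of_support_subset_Iio (σ.support_Pavg_subset hf))
  linarith [nrm_Pavg_le hf (S := S)]

theorem nrm_indicator_part_Pavg (S : SubsymmetricSpace) (σ : OrderedPartition) (n : ℕ)
    (f : ℕ → ℝ) : S.nrm ((σ.part n : Set ℕ).indicator (σ.Pavg f)) = |vstar S σ n f| := by
  have hconst : (σ.part n : Set ℕ).indicator (σ.Pavg f) =
      ((∑ i ∈ σ.part n, f i) / σ.N n) • (σ.part n : Set ℕ).indicator 1 := by
    ext j
    by_cases hj : j ∈ σ.part n
    · simp [hj, σ.Pavg_apply, σ.mem_part_iff.1 hj]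
    · simp [hj]
  have hLam : |S.Lam (σ.N n)| = S.Lam (σ.N n) := abs_of_nonneg (S.nrm_nonneg _)
  rw [hconst, S.nrm_smul, nrm_indicator_one, vstar, abs_mul, abs_div, abs_div, hLam]
  rw [OrderedPartition.N]
  ring

theorem disjFam_indicator_part (σ : OrderedPartition) (g : ℕ → ℝ) (J : Finset ℕ) :
    DisjFam (fun n => (σ.part n : Set ℕ).indicator g) J := fun m _ n _ hmn k => by
  by_cases hk : σ.blockIdx k = m
  · exact .inr (Set.indicator_of_notMem (mt σ.mem_part_iff.1 (hk ▸ hmn)) g)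
  · exact .inl (Set.indicator_of_notMem (mt σ.mem_part_iff.1 hk) g)

theorem mem_indicator_part (n : ℕ) (g : ℕ → ℝ) :
    S.mem ((σ.part n : Set ℕ).indicator g) :=
  mem_of_finite_support ((σ.part n).finite_toSet.subset Set.support_indicator_subset)

theorem UpperEst.exists_nrm_Pavg_le {s : ℝ} (h : S.UpperEst s) (σ : OrderedPartition) :
    ∃ C, 0 ≤ C ∧ ∀ r f, f.support ⊆ Set.Iio (σ.M r) →
      S.nrm (σ.Pavg f) ≤ C * (∑ n ∈ Finset.range r, |vstar S σ n f| ^ s) ^ (1 / s) := by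
  obtain ⟨C, hC⟩ := h
  refine ⟨max C 0, le_max_right _ _, fun r f hf => ?_⟩
  have hest := hC (Finset.range r) _ (fun n _ => mem_indicator_part n _)
    (disjFam_indicator_part σ (σ.Pavg f) _)
  simp only [nrm_indicator_part_Pavg, σ.sum_indicator_part (σ.support_Pavg_subset hf)] at hest
  exact hest.trans (mul_le_mul_of_nonneg_right (le_max_left _ _) (by positivity))

theorem LowerEstE.exists_estNorm_vstar_le {q : ℝ≥0∞} (h : S.LowerEstE q)
    (σ : OrderedPartition) :
    ∃ C, 0 ≤ C ∧ ∀ r f, f.support ⊆ Set.Iio (σ.M r) →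
      estNorm q (Finset.range r) (fun n => vstar S σ n f) ≤ C * S.nrm (σ.Pavg f) := by
  obtain ⟨C, hC⟩ := h
  refine ⟨max C 0, le_max_right _ _, fun r f hf => ?_⟩
  have hest := hC (Finset.range r) _ (fun n _ => mem_indicator_part n _)
    (disjFam_indicator_part σ (σ.Pavg f) _)
  simp only [nrm_indicator_part_Pavg, σ.sum_indicator_part (σ.support_Pavg_subset hf),
    estNorm, abs_abs] at hest
  exact hest.trans (mul_le_mul_of_nonneg_right (le_max_left _ _) (S.nrm_nonneg _))

end SubsymmetricSpace

/-! ### Finite linear combinations in a biorthogonal system -/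

theorem exists_natCast_mul_eq_natCast_add (t : ℕ) (x : Set.Icc (0 : ℝ) 1) :
    ∃ d ≤ t, ∃ y : Set.Icc (0 : ℝ) 1, (t * x : ℝ) = d + y := by
  refine ⟨⌊(t * x : ℝ)⌋₊, Nat.floor_le_of_le (mul_le_of_le_one_right t.cast_nonneg x.2.2),
    ⟨t * x - ⌊(t * x : ℝ)⌋₊, sub_nonneg.2 (Nat.floor_le (mul_nonneg t.cast_nonneg x.2.1)), ?_⟩,
    (add_sub_cancel _ _).symm⟩
  linarith [Nat.lt_floor_add_one (t * x : ℝ)]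

namespace QuasiBanach

theorem q_zero (B : QuasiBanach X) : B.q 0 = 0 := (B.q_eq_zero_iff 0).2 rfl

theorem q_sum_range_le (B : QuasiBanach X) (u : ℕ → X) (m : ℕ) :
    B.q (∑ n ∈ Finset.range m, u n) ≤ B.kappa ^ m * ∑ n ∈ Finset.range m, B.q (u n) := by
  induction m with
  | zero => simp [B.q_zero]
  | succ m ih =>
    have hpow : B.q (u m) ≤ B.kappa ^ m * B.q (u m) :=
      le_mul_of_one_le_left (B.q_nonneg _) (one_le_pow₀ B.one_le_kappa)
    have hkappa : 0 ≤ B.kappa := zero_le_one.trans B.one_le_kappa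
    rw [Finset.sum_range_succ, Finset.sum_range_succ]
    calc B.q (∑ n ∈ Finset.range m, u n + u m)
        ≤ B.kappa * (B.q (∑ n ∈ Finset.range m, u n) + B.q (u m)) := B.q_triangle _ _
      _ ≤ B.kappa * (B.kappa ^ m * ∑ n ∈ Finset.range m, B.q (u n)
            + B.kappa ^ m * B.q (u m)) := by gcongr
      _ = B.kappa ^ (m + 1) * (∑ n ∈ Finset.range m, B.q (u n) + B.q (u m)) := by ring

end QuasiBanach

namespace BioSystem

/-- The linear combination `∑_{n < m} a n • x_n` of the vectors `x_n` of a biorthogonal system,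
as a linear map in the coefficient sequence `a`. -/
def linComb (b : BioSystem mem nrm) (m : ℕ) : (ℕ → ℝ) →ₗ[ℝ] X :=
  ∑ n ∈ Finset.range m, (LinearMap.proj n).smulRight (b.vec n)

theorem linComb_apply (b : BioSystem mem nrm) (m : ℕ) (a : ℕ → ℝ) :
    b.linComb m a = ∑ n ∈ Finset.range m, a n • b.vec n := by
  simp [linComb]

theorem linComb_congr (b : BioSystem mem nrm) {m : ℕ} {a a' : ℕ → ℝ}
    (h : ∀ n < m, a n = a' n) : b.linComb m a = b.linComb m a' := by
  rw [linComb_apply, linComb_apply]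
  exact Finset.sum_congr rfl fun n hn => by rw [h n (Finset.mem_range.1 hn)]

section FullCarrier

variable (b : BioSystem (fun _ : X => True) nrm)

theorem coord_zero (n : ℕ) : b.coord n 0 = 0 := by
  simpa using b.coord_smul n 0 0 trivial

theorem vec_ne_zero (n : ℕ) : b.vec n ≠ 0 := fun h => by
  have hbiorth := b.biorth n n
  rw [h, coord_zero, if_pos rfl] at hbiorth
  exact zero_ne_one hbiorth

theorem coord_linComb (n m : ℕ) (a : ℕ → ℝ) :
    b.coord n (b.linComb m a) = if n < m then a n else 0 := by
  induction m with
  | zero => simp [linComb_apply, coord_zero]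
  | succ m ih =>
    rw [linComb_apply, Finset.sum_range_succ, ← linComb_apply, b.coord_add _ _ _ trivial trivial,
      b.coord_smul _ _ _ trivial, b.biorth, ih]
    rcases lt_trichotomy n m with h | rfl | h
    · simp [h, h.ne, h.trans (Nat.lt_succ_self m)]
    · simp
    · simp [h.not_gt, h.ne', Nat.succ_le_iff.2 h |>.not_gt]

theorem proj_linComb (A : Finset ℕ) (m : ℕ) (a : ℕ → ℝ) :
    b.proj A (b.linComb m a) = b.linComb m ((A : Set ℕ).indicator a) := by
  simp only [proj, coord_linComb]
  simp only [linComb_apply, Set.indicator_apply, Finset.mem_coe, ite_smul, zero_smul,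
    ← Finset.sum_filter]
  congr 1
  ext n
  simp [and_comm]

end FullCarrier

variable {B : QuasiBanach X} (b : BioSystem (fun _ : X => True) B.q)

theorem exists_abs_le_mul_q_linComb (m : ℕ) :
    ∃ K, 0 ≤ K ∧ ∀ a, ∀ n < m, |a n| ≤ K * B.q (b.linComb m a) := by
  choose C hC using b.coord_bdd
  refine ⟨∑ n ∈ Finset.range m, |C n|, Finset.sum_nonneg fun _ _ => abs_nonneg _,
    fun a n hn => ?_⟩
  calc |a n| = |b.coord n (b.linComb m a)| := by rw [coord_linComb, if_pos hn]
    _ ≤ C n * B.q (b.linComb m a) := hC n _ trivial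
    _ ≤ (∑ n ∈ Finset.range m, |C n|) * B.q (b.linComb m a) :=
        mul_le_mul_of_nonneg_right ((le_abs_self _).trans <|
          Finset.single_le_sum (f := fun n => |C n|) (fun _ _ => abs_nonneg _)
            (Finset.mem_range.2 hn)) (B.q_nonneg _)

theorem exists_q_linComb_le (m : ℕ) :
    ∃ K, 0 ≤ K ∧ ∀ a t, (∀ n < m, |a n| ≤ t) → B.q (b.linComb m a) ≤ K * t := by
  have hkappa : 0 ≤ B.kappa ^ m := pow_nonneg (zero_le_one.trans B.one_le_kappa) m
  refine ⟨B.kappa ^ m * ∑ n ∈ Finset.range m, B.q (b.vec n),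
    mul_nonneg hkappa (Finset.sum_nonneg fun _ _ => B.q_nonneg _), fun a t ha => ?_⟩
  calc B.q (b.linComb m a)
      ≤ B.kappa ^ m * ∑ n ∈ Finset.range m, B.q (a n • b.vec n) :=
        linComb_apply b m a ▸ B.q_sum_range_le _ m
    _ ≤ B.kappa ^ m * ∑ n ∈ Finset.range m, B.q (b.vec n) * t := by
        gcongr with n hn
        rw [B.q_smul, mul_comm]
        exact mul_le_mul_of_nonneg_left (ha n (Finset.mem_range.1 hn)) (B.q_nonneg _)
    _ = B.kappa ^ m * (∑ n ∈ Finset.range m, B.q (b.vec n)) * t := by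
        rw [← Finset.sum_mul, mul_assoc]

theorem exists_q_linComb_le_of_abs_le (m : ℕ) :
    ∃ K, 0 ≤ K ∧ ∀ a a', (∀ n < m, |a' n| ≤ |a n|) →
      B.q (b.linComb m a') ≤ K * B.q (b.linComb m a) := by
  obtain ⟨K, hK, hcoeff⟩ := b.exists_abs_le_mul_q_linComb m
  obtain ⟨K', hK', hsize⟩ := b.exists_q_linComb_le m
  exact ⟨K' * K, mul_nonneg hK' hK, fun a a' h => mul_assoc K' K _ ▸
    hsize a' _ fun n hn => (h n hn).trans (hcoeff a n hn)⟩

/-! ### The parameters `k̃_m` -/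

theorem ktilde_nonneg (m : ℕ) : 0 ≤ b.ktilde m :=
  Real.sSup_nonneg (by rintro _ ⟨A, a, -, rfl⟩; exact B.q_nonneg _)

theorem ktilde_le {m : ℕ} {K : ℝ} (hK : 0 ≤ K) (h : ∀ (A : Finset ℕ) (a : ℕ → ℝ),
    B.q (b.linComb m ((A : Set ℕ).indicator a)) ≤ K * B.q (b.linComb m a)) :
    b.ktilde m ≤ K := by
  refine Real.sSup_le ?_ hK
  rintro _ ⟨A, a, ha, rfl⟩
  rw [← linComb_apply] at ha ⊢
  rw [proj_linComb]
  exact (h A a).trans (mul_le_of_le_one_right hK ha)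

theorem ktilde_zero : b.ktilde 0 = 0 :=
  le_antisymm (b.ktilde_le le_rfl fun A a => by simp [linComb_apply, B.q_zero])
    (b.ktilde_nonneg 0)

theorem q_linComb_indicator_le_ktilde {m : ℕ} {a : ℕ → ℝ} (ha : B.q (b.linComb m a) ≤ 1)
    (A : Finset ℕ) : B.q (b.linComb m ((A : Set ℕ).indicator a)) ≤ b.ktilde m := by
  obtain ⟨K, hK, hdom⟩ := b.exists_q_linComb_le_of_abs_le m
  rw [← proj_linComb]
  refine le_csSup ⟨K, ?_⟩ ⟨A, a, by rwa [← linComb_apply], by rw [linComb_apply]⟩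
  rintro _ ⟨A', a', ha', rfl⟩
  rw [← linComb_apply] at ha' ⊢
  rw [proj_linComb]
  exact (hdom a' _ fun n _ => norm_indicator_le_norm_self a' n).trans
    (mul_le_of_le_one_right hK ha')

theorem q_linComb_indicator_le (m : ℕ) (A : Set ℕ) (a : ℕ → ℝ) :
    B.q (b.linComb m (A.indicator a)) ≤ b.ktilde m * B.q (b.linComb m a) := by
  obtain ⟨K, -, hdom⟩ := b.exists_q_linComb_le_of_abs_le m
  rcases (B.q_nonneg (b.linComb m a)).eq_or_lt with hzero | hpos
  · simpa [← hzero] using hdom a (A.indicator a) fun n _ => norm_indicator_le_norm_self a n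
  set c := B.q (b.linComb m a)
  have hunit : B.q (b.linComb m (c⁻¹ • a)) ≤ 1 := by
    rw [map_smul, B.q_smul, abs_of_pos (inv_pos.2 hpos), inv_mul_cancel₀ hpos.ne']
  have hfinite : b.linComb m (A.indicator (c⁻¹ • a)) =
      b.linComb m (((Finset.range m).filter (· ∈ A) : Set ℕ).indicator (c⁻¹ • a)) :=
    b.linComb_congr fun n hn => by simp [Set.indicator_apply, hn]
  have hsmul : A.indicator (c⁻¹ • a) = c⁻¹ • A.indicator a := Set.indicator_const_smul A c⁻¹ a
  have hscaled := b.q_linComb_indicator_le_ktilde hunit ((Finset.range m).filter (· ∈ A))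
  rw [← hfinite, hsmul, map_smul, B.q_smul, abs_of_pos (inv_pos.2 hpos),
    inv_mul_le_iff₀ hpos] at hscaled
  rwa [mul_comm]

theorem one_le_ktilde {m : ℕ} (hm : 0 < m) : 1 ≤ b.ktilde m := by
  have hcomb : b.linComb m (unitVec 0) = b.vec 0 := by
    simp [linComb_apply, unitVec, hm.ne']
  have hpos : 0 < B.q (b.linComb m (unitVec 0)) := (B.q_nonneg _).lt_of_ne' fun h =>
    b.vec_ne_zero 0 (hcomb ▸ (B.q_eq_zero_iff _).1 h)
  have h := b.q_linComb_indicator_le m Set.univ (unitVec 0)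
  rw [Set.indicator_univ] at h
  exact (le_mul_iff_one_le_left hpos).1 h

theorem q_linComb_natCast_mul_le (m : ℕ) {t : ℕ} {d : ℕ → ℕ} (hd : ∀ n, d n ≤ t) (a : ℕ → ℝ) :
    B.q (b.linComb m (fun n => d n * a n)) ≤
      B.kappa ^ t * t * (b.ktilde m * B.q (b.linComb m a)) := by
  have hlayers : (fun n => d n * a n) = ∑ i ∈ Finset.range t, {n | i < d n}.indicator a := by
    ext n
    have hfilter : (Finset.range t).filter (· < d n) = Finset.range (d n) := by
      ext i
      simpa using fun hi : i < d n => hi.trans_le (hd n)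
    simp [Finset.sum_apply, Set.indicator_apply, ← Finset.sum_filter, hfilter]
  have hkappa : 0 ≤ B.kappa := zero_le_one.trans B.one_le_kappa
  calc B.q (b.linComb m (fun n => d n * a n))
      ≤ B.kappa ^ t * ∑ i ∈ Finset.range t, B.q (b.linComb m ({n | i < d n}.indicator a)) := by
        rw [hlayers, map_sum]
        exact B.q_sum_range_le _ t
    _ ≤ B.kappa ^ t * ∑ _i ∈ Finset.range t, b.ktilde m * B.q (b.linComb m a) := by
        gcongr
        exact b.q_linComb_indicator_le m _ a
    _ = B.kappa ^ t * t * (b.ktilde m * B.q (b.linComb m a)) := by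
        rw [Finset.sum_const, Finset.card_range, nsmul_eq_mul, mul_assoc]

-- With `T` the supremum of the left-hand sides over all multipliers `l`, splitting `t * l` into
-- integer and fractional parts gives `T ≤ (κ / t) * (D + T) ≤ (D + T) / 2`, where `D` is the
-- right-hand side.
theorem q_linComb_mul_le (m : ℕ) {t : ℕ} (ht : 2 * B.kappa ≤ t) (a : ℕ → ℝ)
    (l : ℕ → Set.Icc (0 : ℝ) 1) :
    B.q (b.linComb m (fun n => l n * a n)) ≤
      B.kappa ^ t * t * (b.ktilde m * B.q (b.linComb m a)) := by
  set D := B.kappa ^ t * t * (b.ktilde m * B.q (b.linComb m a))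
  let F (l : ℕ → Set.Icc (0 : ℝ) 1) : ℝ := B.q (b.linComb m (fun n => l n * a n))
  obtain ⟨K, -, hdom⟩ := b.exists_q_linComb_le_of_abs_le m
  have hbdd : BddAbove (Set.range F) := by
    refine ⟨K * B.q (b.linComb m a), ?_⟩
    rintro _ ⟨l', rfl⟩
    refine hdom a _ fun n _ => ?_
    rw [abs_mul, abs_of_nonneg (l' n).2.1]
    exact mul_le_of_le_one_left (abs_nonneg _) (l' n).2.2
  have hle (l : ℕ → Set.Icc (0 : ℝ) 1) : F l ≤ ⨆ l, F l := le_ciSup hbdd l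
  have hkappa : 0 < B.kappa := zero_lt_one.trans_le B.one_le_kappa
  have htpos : (0 : ℝ) < t := by linarith
  have hhalf (l : ℕ → Set.Icc (0 : ℝ) 1) : F l ≤ (D + ⨆ l, F l) / 2 := by
    choose d hd l' hl' using fun n => exists_natCast_mul_eq_natCast_add t (l n)
    have hsplit : (t : ℝ) • b.linComb m (fun n => l n * a n) =
        b.linComb m (fun n => d n * a n) + b.linComb m (fun n => l' n * a n) := by
      rw [← map_smul, ← map_add]
      congr 1
      ext n
      simp only [Pi.smul_apply, Pi.add_apply, smul_eq_mul, ← add_mul, ← hl', mul_assoc]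
    have hscaled : t * F l ≤ B.kappa * (D + ⨆ l, F l) := by
      rw [← abs_of_pos htpos, ← B.q_smul, hsplit]
      exact (B.q_triangle _ _).trans <| mul_le_mul_of_nonneg_left
        (add_le_add (b.q_linComb_natCast_mul_le m hd a) (hle l')) hkappa.le
    have hnonneg : 0 ≤ D + ⨆ l, F l := nonneg_of_mul_nonneg_right
      ((mul_nonneg htpos.le (B.q_nonneg _)).trans hscaled) hkappa
    refine le_of_mul_le_mul_left (hscaled.trans ?_) htpos
    linarith [mul_le_mul_of_nonneg_right ht hnonneg]
  linarith [hle l, ciSup_le hhalf]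

end BioSystem

/-! ### The parameters `η` and `β` -/

theorem sInf_mem_setOf_forall_le_mul {ι : Type*} {φ ψ : ι → ℝ}
    (h : ∃ C, 0 ≤ C ∧ ∀ i, φ i ≤ C * ψ i) :
    sInf {C | 0 ≤ C ∧ ∀ i, φ i ≤ C * ψ i} ∈ {C | 0 ≤ C ∧ ∀ i, φ i ≤ C * ψ i} := by
  refine IsClosed.csInf_mem ?_ h ⟨0, fun C hC => hC.1⟩
  simp only [Set.ofPred_and, Set.ofPred_forall]
  exact isClosed_Ici.inter <| isClosed_iInter fun i =>
    isClosed_le continuous_const (continuous_id.mul continuous_const)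

theorem abs_le_estNorm {ι : Type*} {q : ℝ≥0∞} (hq : 0 < q) {J : Finset ι} {g : ι → ℝ} {i : ι}
    (hi : i ∈ J) : |g i| ≤ estNorm q J g := by
  rw [estNorm]
  split_ifs with htop
  · have hsup : Real.toNNReal |g i| ≤ J.sup fun i => Real.toNNReal |g i| :=
      Finset.le_sup (f := fun i => Real.toNNReal |g i|) hi
    exact Real.toNNReal_le_iff_le_coe.1 hsup
  · have hq' : q.toReal ≠ 0 := (ENNReal.toReal_pos hq.ne' htop).ne'
    calc |g i| = (|g i| ^ q.toReal) ^ (1 / q.toReal) := by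
          rw [one_div, Real.rpow_rpow_inv (abs_nonneg _) hq']
      _ ≤ _ := by
          gcongr
          exact Finset.single_le_sum (f := fun i => |g i| ^ q.toReal)
            (fun _ _ => by positivity) hi

section Parameters

variable {B : QuasiBanach X} (b : QBasis B) (r : ℕ)

theorem etaParam_spec {s : ℝ} (hs : 0 < s) : 0 ≤ etaParam B b s r ∧ ∀ a : ℕ → ℝ,
    (∑ n ∈ Finset.range r, |a n| ^ s) ^ (1 / s) ≤ etaParam B b s r * B.q (b.linComb r a) := by
  obtain ⟨K, hK, hcoeff⟩ := b.exists_abs_le_mul_q_linComb r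
  simp only [b.linComb_apply] at hcoeff ⊢
  refine sInf_mem_setOf_forall_le_mul ⟨(r : ℝ) ^ (1 / s) * K, by positivity, fun a => ?_⟩
  set x := ∑ n ∈ Finset.range r, a n • b.vec n
  have hx : 0 ≤ K * B.q x := mul_nonneg hK (B.q_nonneg x)
  calc (∑ n ∈ Finset.range r, |a n| ^ s) ^ (1 / s)
      ≤ (∑ _n ∈ Finset.range r, (K * B.q x) ^ s) ^ (1 / s) := by
        gcongr with n hn
        exact hcoeff a n (Finset.mem_range.1 hn)
    _ = (r : ℝ) ^ (1 / s) * K * B.q x := by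
        rw [Finset.sum_const, Finset.card_range, nsmul_eq_mul,
          Real.mul_rpow r.cast_nonneg (by positivity), one_div, Real.rpow_rpow_inv hx hs.ne',
          mul_assoc]

theorem betaParam_spec {q : ℝ≥0∞} (hq : 0 < q) : 0 ≤ betaParam B b q r ∧ ∀ a : ℕ → ℝ,
    B.q (b.linComb r a) ≤ betaParam B b q r * estNorm q (Finset.range r) a := by
  obtain ⟨K, hK, hsize⟩ := b.exists_q_linComb_le r
  simp only [b.linComb_apply] at hsize ⊢
  exact sInf_mem_setOf_forall_le_mul ⟨K, hK, fun a => hsize a _ fun n hn =>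
    abs_le_estNorm hq (Finset.mem_range.2 hn)⟩

end Parameters

/-! ### The space `𝕐[𝒳, 𝕊, σ]` -/

theorem SubsymmetricSpace.Lam_pos (S : SubsymmetricSpace) {m : ℕ} (hm : 0 < m) :
    0 < S.Lam m := by
  have hsupp : (indic m).support ⊆ Set.Iio m := fun j hj => by simpa [indic] using hj
  refine (S.nrm_nonneg _).lt_of_ne' fun h => ?_
  have hzero := (S.nrm_eq_zero (mem_of_support_subset_Iio hsupp)).1 h
  simpa [indic, hm] using congrFun hzero 0

variable {B : QuasiBanach X} {b : QBasis B} {S : SubsymmetricSpace} {σ : OrderedPartition}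
  {r : ℕ} {f : ℕ → ℝ}

theorem vstar_add (S : SubsymmetricSpace) (σ : OrderedPartition) (n : ℕ) (f g : ℕ → ℝ) :
    vstar S σ n (f + g) = vstar S σ n f + vstar S σ n g := by
  simp only [vstar, Pi.add_apply, Finset.sum_add_distrib, mul_add]

theorem Hmap_eq_linComb (hf : f.support ⊆ Set.Iio (σ.M r)) :
    Hmap B b S σ f = b.linComb r (fun n => vstar S σ n f) := by
  rw [b.linComb_apply]
  refine finsum_eq_sum_of_support_subset _ fun n hn => ?_
  contrapose! hn
  simp [vstar, σ.sum_part_eq_zero hf (by simpa using hn)]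

/-- The step function `∑_n a_n v_n`, where `v_n` is the normalized indicator of the block `σ_n`. -/
def stepFun (S : SubsymmetricSpace) (σ : OrderedPartition) (a : ℕ → ℝ) (j : ℕ) : ℝ :=
  a (σ.blockIdx j) / S.Lam (σ.N (σ.blockIdx j))

theorem stepFun_indicator (A : Set ℕ) (a : ℕ → ℝ) :
    stepFun S σ (A.indicator a) = (σ.blockIdx ⁻¹' A).indicator (stepFun S σ a) := by
  ext j
  by_cases hj : σ.blockIdx j ∈ A <;> simp [stepFun, hj]

theorem sum_part_stepFun (a : ℕ → ℝ) (n : ℕ) :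
    ∑ j ∈ σ.part n, stepFun S σ a j = σ.N n * (a n / S.Lam (σ.N n)) := by
  rw [Finset.sum_congr rfl fun j hj => by rw [stepFun, σ.mem_part_iff.1 hj], Finset.sum_const,
    nsmul_eq_mul, OrderedPartition.N]

theorem Qavg_stepFun (a : ℕ → ℝ) : σ.Qavg (stepFun S σ a) = 0 := by
  ext j
  have hN : (σ.N (σ.blockIdx j) : ℝ) ≠ 0 := Nat.cast_ne_zero.2 (σ.N_pos _).ne'
  rw [OrderedPartition.Qavg, Pi.sub_apply, σ.Pavg_apply, sum_part_stepFun,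
    mul_div_cancel_left₀ _ hN, stepFun, sub_self, Pi.zero_apply]

theorem vstar_stepFun (a : ℕ → ℝ) (n : ℕ) : vstar S σ n (stepFun S σ a) = a n := by
  have hN : (σ.N n : ℝ) ≠ 0 := Nat.cast_ne_zero.2 (σ.N_pos n).ne'
  have hLam := (S.Lam_pos (σ.N_pos n)).ne'
  rw [vstar, sum_part_stepFun]
  field_simp

theorem YNorm_indicator_stepFun (a : ℕ → ℝ) :
    YNorm B b S σ ((Set.Iio (σ.M r)).indicator (stepFun S σ a)) = B.q (b.linComb r a) := by
  have hpreimage : σ.blockIdx ⁻¹' Set.Iio r = Set.Iio (σ.M r) :=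
    Set.ext fun _ => σ.blockIdx_lt_iff
  rw [YNorm, Hmap_eq_linComb Set.support_indicator_subset, ← hpreimage, ← stepFun_indicator,
    Qavg_stepFun, (S.nrm_eq_zero S.zero_mem).2 rfl, zero_add]
  simp only [vstar_stepFun]
  exact congrArg B.q (b.linComb_congr fun n hn => Set.indicator_of_mem (Set.mem_Iio.2 hn) a)

theorem exists_vstar_indicator_Pavg (S : SubsymmetricSpace) (σ : OrderedPartition)
    (A : Set ℕ) : ∃ l : ℕ → Set.Icc (0 : ℝ) 1, ∀ n f,
      vstar S σ n (A.indicator (σ.Pavg f)) = l n * vstar S σ n f := by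
  have hcard (n : ℕ) : (((σ.part n).filter (· ∈ A)).card : ℝ) ≤ σ.N n :=
    Nat.cast_le.2 (Finset.card_filter_le _ _)
  refine ⟨fun n => ⟨((σ.part n).filter (· ∈ A)).card / σ.N n, by positivity,
    div_le_one_of_le₀ (hcard n) (Nat.cast_nonneg _)⟩, fun n f => ?_⟩
  have hsum : ∑ j ∈ σ.part n, A.indicator (σ.Pavg f) j =
      ((σ.part n).filter (· ∈ A)).card * ((∑ i ∈ σ.part n, f i) / σ.N n) := by
    simp only [Set.indicator_apply, ← Finset.sum_filter]
    rw [Finset.sum_congr rfl fun j hj => by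
      rw [σ.Pavg_apply, σ.mem_part_iff.1 (Finset.mem_filter.1 hj).1], Finset.sum_const,
      nsmul_eq_mul]
  rw [vstar, vstar, hsum]
  ring

theorem exists_nrm_le_mul_YNorm {s : ℝ} (hs : 0 < s) (h : S.UpperEst s) (b : QBasis B)
    (σ : OrderedPartition) : ∃ C, 0 ≤ C ∧ ∀ r f, f.support ⊆ Set.Iio (σ.M r) →
      S.nrm f ≤ (1 + C * etaParam B b s r) * YNorm B b S σ f := by
  obtain ⟨C, hC, hPavg⟩ := h.exists_nrm_Pavg_le σ
  refine ⟨C, hC, fun r f hf => ?_⟩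
  obtain ⟨heta, hcoeff⟩ := etaParam_spec b r hs
  have hP : S.nrm (σ.Pavg f) ≤ C * (etaParam B b s r * B.q (Hmap B b S σ f)) := by
    rw [Hmap_eq_linComb hf]
    exact (hPavg r f hf).trans (mul_le_mul_of_nonneg_left (hcoeff _) hC)
  have hsplit : S.nrm f ≤ S.nrm (σ.Qavg f) + S.nrm (σ.Pavg f) := by
    conv_lhs => rw [← sub_add_cancel f (σ.Pavg f)]
    exact S.nrm_triangle (S.mem_of_support_subset_Iio (σ.support_Qavg_subset hf))
      (S.mem_of_support_subset_Iio (σ.support_Pavg_subset hf))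
  have hcross : 0 ≤ C * etaParam B b s r * S.nrm (σ.Qavg f) :=
    mul_nonneg (mul_nonneg hC heta) (S.nrm_nonneg _)
  rw [YNorm]
  linarith [B.q_nonneg (Hmap B b S σ f)]

theorem exists_q_linComb_vstar_le {q : ℝ≥0∞} (hq : 0 < q) (h : S.LowerEstE q) (b : QBasis B)
    (σ : OrderedPartition) : ∃ C, 0 ≤ C ∧ ∀ r f, f.support ⊆ Set.Iio (σ.M r) →
      B.q (b.linComb r (fun n => vstar S σ n f)) ≤ C * betaParam B b q r * S.nrm f := by
  obtain ⟨C, hC, hest⟩ := h.exists_estNorm_vstar_le σ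
  refine ⟨C * 2, by positivity, fun r f hf => ?_⟩
  obtain ⟨hbeta, hsize⟩ := betaParam_spec b r hq
  calc B.q (b.linComb r (fun n => vstar S σ n f))
      ≤ betaParam B b q r * estNorm q (Finset.range r) (fun n => vstar S σ n f) := hsize _
    _ ≤ betaParam B b q r * (C * (2 * S.nrm f)) := by
        gcongr
        exact (hest r f hf).trans (by gcongr; exact S.nrm_Pavg_le hf)
    _ = C * 2 * betaParam B b q r * S.nrm f := by ring

theorem exists_q_linComb_vstar_indicator_Pavg_le (b : QBasis B) (S : SubsymmetricSpace)
    (σ : OrderedPartition) : ∃ C, 0 ≤ C ∧ ∀ r (A : Set ℕ) f,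
      B.q (b.linComb r (fun n => vstar S σ n (A.indicator (σ.Pavg f)))) ≤
        C * b.ktilde r * B.q (b.linComb r (fun n => vstar S σ n f)) := by
  obtain ⟨t, ht⟩ := exists_nat_ge (2 * B.kappa)
  have hkappa : 0 ≤ B.kappa := zero_le_one.trans B.one_le_kappa
  refine ⟨B.kappa ^ t * t, by positivity, fun r A f => ?_⟩
  obtain ⟨l, hl⟩ := exists_vstar_indicator_Pavg S σ A
  simp only [hl, mul_assoc _ (b.ktilde r)]
  exact b.q_linComb_mul_le r ht _ l

theorem exists_q_Hmap_indicator_le {q : ℝ≥0∞} (hq : 0 < q) (h : S.LowerEstE q) (b : QBasis B)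
    (σ : OrderedPartition) : ∃ C, 0 ≤ C ∧ ∀ r (A : Set ℕ) f, f.support ⊆ Set.Iio (σ.M r) →
      B.q (Hmap B b S σ (A.indicator f)) ≤
        C * max (b.ktilde r) (betaParam B b q r) * YNorm B b S σ f := by
  obtain ⟨C₁, hC₁, hQ⟩ := exists_q_linComb_vstar_le hq h b σ
  obtain ⟨C₂, hC₂, hP⟩ := exists_q_linComb_vstar_indicator_Pavg_le b S σ
  have hkappa : 0 ≤ B.kappa := zero_le_one.trans B.one_le_kappa
  refine ⟨B.kappa * (C₁ + C₂), by positivity, fun r A f hf => ?_⟩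
  set μ := max (b.ktilde r) (betaParam B b q r)
  have hμ : 0 ≤ μ := (b.ktilde_nonneg r).trans (le_max_left _ _)
  have hcoeff : (fun n => vstar S σ n (A.indicator f)) =
      (fun n => vstar S σ n (A.indicator (σ.Qavg f))) +
        fun n => vstar S σ n (A.indicator (σ.Pavg f)) := by
    ext n
    rw [Pi.add_apply, ← vstar_add, ← Set.indicator_add', OrderedPartition.Qavg, sub_add_cancel]
  have hQ' : B.q (b.linComb r fun n => vstar S σ n (A.indicator (σ.Qavg f))) ≤
      C₁ * μ * S.nrm (σ.Qavg f) := by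
    have hsupp := σ.support_Qavg_subset hf
    have hrestrict := S.nrm_indicator_le (S.mem_of_support_subset_Iio hsupp) A
    refine (hQ r _ (support_indicator_subset_of_subset hsupp)).trans ?_
    exact mul_le_mul (mul_le_mul_of_nonneg_left (le_max_right _ _) hC₁) hrestrict
      (S.nrm_nonneg _) (mul_nonneg hC₁ hμ)
  have hP' : B.q (b.linComb r fun n => vstar S σ n (A.indicator (σ.Pavg f))) ≤
      C₂ * μ * B.q (Hmap B b S σ f) := by
    rw [Hmap_eq_linComb hf]
    exact (hP r A f).trans (mul_le_mul_of_nonneg_right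
      (mul_le_mul_of_nonneg_left (le_max_left _ _) hC₂) (B.q_nonneg _))
  rw [Hmap_eq_linComb (support_indicator_subset_of_subset hf), hcoeff, map_add, YNorm]
  refine (B.q_triangle _ _).trans ((mul_le_mul_of_nonneg_left (add_le_add hQ' hP') hkappa).trans ?_)
  have hcross : 0 ≤ B.kappa * (C₁ * μ * B.q (Hmap B b S σ f) + C₂ * μ * S.nrm (σ.Qavg f)) := by
    have := S.nrm_nonneg (σ.Qavg f)
    have := B.q_nonneg (Hmap B b S σ f)
    positivity
  linarith

theorem exists_YNorm_indicator_le {s : ℝ} (hs : 0 < s) (hupper : S.UpperEst s) {q : ℝ≥0∞}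
    (hq : 0 < q) (hlower : S.LowerEstE q) (b : QBasis B) (σ : OrderedPartition) :
    ∃ C, 0 ≤ C ∧ ∀ r, 0 < r → ∀ (A : Set ℕ) f, f.support ⊆ Set.Iio (σ.M r) →
      YNorm B b S σ (A.indicator f) ≤
        C * max (b.ktilde r) (max (etaParam B b s r) (betaParam B b q r)) *
          YNorm B b S σ f := by
  obtain ⟨C₁, hC₁, hS⟩ := exists_nrm_le_mul_YNorm hs hupper b σ
  obtain ⟨C₂, hC₂, hH⟩ := exists_q_Hmap_indicator_le hq hlower b σ
  refine ⟨3 * (1 + C₁) + C₂, by positivity, fun r hr A f hf => ?_⟩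
  set μ := max (b.ktilde r) (max (etaParam B b s r) (betaParam B b q r))
  have hone : 1 ≤ μ := (b.one_le_ktilde hr).trans (le_max_left _ _)
  have heta : etaParam B b s r ≤ μ := (le_max_left _ _).trans (le_max_right _ _)
  have hkbeta : max (b.ktilde r) (betaParam B b q r) ≤ μ :=
    max_le_max_left _ (le_max_right _ _)
  have hy : 0 ≤ YNorm B b S σ f := add_nonneg (S.nrm_nonneg _) (B.q_nonneg _)
  calc YNorm B b S σ (A.indicator f)
      ≤ 3 * S.nrm (A.indicator f) + B.q (Hmap B b S σ (A.indicator f)) :=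
        add_le_add_left (S.nrm_Qavg_le (support_indicator_subset_of_subset hf)) _
    _ ≤ 3 * ((1 + C₁ * etaParam B b s r) * YNorm B b S σ f) +
          C₂ * max (b.ktilde r) (betaParam B b q r) * YNorm B b S σ f := by
        gcongr
        · exact (S.nrm_indicator_le (S.mem_of_support_subset_Iio hf) A).trans (hS r f hf)
        · exact hH r A f hf
    _ ≤ 3 * ((μ + C₁ * μ) * YNorm B b S σ f) + C₂ * μ * YNorm B b S σ f := by gcongr
    _ = (3 * (1 + C₁) + C₂) * μ * YNorm B b S σ f := by ring

/-! ### Unconditionality parameters of the unit vector system -/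

section UnitVectors

variable {Y : Type*} [AddCommGroup Y] [Module ℝ Y] {BY : QuasiBanach Y} {bY : QBasis BY}

theorem q_linComb_eq_YNorm {j : (ℕ →₀ ℝ) →ₗ[ℝ] Y}
    (hiso : ∀ f : ℕ →₀ ℝ, BY.q (j f) = YNorm B b S σ f)
    (huvs : ∀ n, bY.vec n = j (Finsupp.single n 1)) (m : ℕ) (a : ℕ → ℝ) :
    BY.q (bY.linComb m a) = YNorm B b S σ ((Set.Iio m).indicator a) := by
  have hcomb : bY.linComb m a = j (∑ n ∈ Finset.range m, a n • Finsupp.single n 1) := by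
    simp only [bY.linComb_apply, huvs, map_sum, map_smul]
  rw [hcomb, hiso]
  congr 1
  ext i
  simp [Finsupp.finsetSum_apply, Finsupp.single_apply, Set.indicator_apply]

theorem ktilde_le_ktilde_M
    (hY : ∀ m a, BY.q (bY.linComb m a) = YNorm B b S σ ((Set.Iio m).indicator a)) (r : ℕ) :
    b.ktilde r ≤ bY.ktilde (σ.M r) := by
  have hstep (a : ℕ → ℝ) :
      B.q (b.linComb r a) = BY.q (bY.linComb (σ.M r) (stepFun S σ a)) := by
    rw [hY, YNorm_indicator_stepFun]
  refine b.ktilde_le (bY.ktilde_nonneg _) fun A a => ?_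
  rw [hstep, hstep, stepFun_indicator]
  exact bY.q_linComb_indicator_le _ _ _

theorem exists_ktilde_M_le
    (hY : ∀ m a, BY.q (bY.linComb m a) = YNorm B b S σ ((Set.Iio m).indicator a))
    {s : ℝ} (hs : 0 < s) (hupper : S.UpperEst s) {q : ℝ≥0∞}
    (hq : 0 < q) (hlower : S.LowerEstE q) :
    ∃ C, ∀ r, bY.ktilde (σ.M r) ≤
      C * max (b.ktilde r) (max (etaParam B b s r) (betaParam B b q r)) := by
  obtain ⟨C, hC, hbound⟩ := exists_YNorm_indicator_le hs hupper hq hlower b σ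
  refine ⟨C, fun r => ?_⟩
  have hK := mul_nonneg hC ((b.ktilde_nonneg r).trans
    (le_max_left _ (max (etaParam B b s r) (betaParam B b q r))))
  rcases r.eq_zero_or_pos with rfl | hr
  · exact bY.ktilde_zero.trans_le hK
  · refine bY.ktilde_le hK fun A a => ?_
    rw [hY, hY, Set.indicator_indicator, Set.inter_comm, ← Set.indicator_indicator]
    exact hbound r hr A _ Set.support_indicator_subset

end UnitVectors

theorem statement14_general {X : Type*} [AddCommGroup X] [Module ℝ X] (B : QuasiBanach X)
    (bX : QBasis B) (S : SubsymmetricSpace) (σ : OrderedPartition)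
    {Y : Type*} [AddCommGroup Y] [Module ℝ Y] (BY : QuasiBanach Y)
    (j : (ℕ →₀ ℝ) →ₗ[ℝ] Y)
    (hiso : ∀ f : ℕ →₀ ℝ, BY.q (j f) = YNorm B bX S σ ⇑f)
    (bY : QBasis BY) (huvs : ∀ n : ℕ, bY.vec n = j (Finsupp.single n 1))
    (s : ℝ) (hs : 0 < s) (hupper : S.UpperEst s)
    (q : ℝ≥0∞) (hq : 0 < q) (hlower : S.LowerEstE q) :
    (∀ r : ℕ, bX.toBioSystem.ktilde r ≤ bY.toBioSystem.ktilde (σ.M r)) ∧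
    ∃ C : ℝ, ∀ r : ℕ, bY.toBioSystem.ktilde (σ.M r) ≤
      C * max (bX.toBioSystem.ktilde r)
        (max (etaParam B bX s r) (betaParam B bX q r)) :=
  have hY := q_linComb_eq_YNorm hiso huvs
  ⟨ktilde_le_ktilde_M hY, exists_ktilde_M_le hY hs hupper hq hlower⟩

theorem statement14 {X : Type*} [AddCommGroup X] [Module ℝ X] (B : QuasiBanach X)
    (bX : QBasis B) (hsemi : bX.toBioSystem.SemiNormalized)
    (S : SubsymmetricSpace) (σ : OrderedPartition)
    (hLRP : LRP S.Lam) (hURP : URP S.Lam)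
    (hMN : ∃ c : ℝ, ∀ r : ℕ, (σ.M r : ℝ) ≤ c * (σ.N r : ℝ))
    {Y : Type*} [AddCommGroup Y] [Module ℝ Y] (BY : QuasiBanach Y)
    (j : (ℕ →₀ ℝ) →ₗ[ℝ] Y)
    (hiso : ∀ f : ℕ →₀ ℝ, BY.q (j f) = YNorm B bX S σ ⇑f)
    (hdense : ∀ y : Y, ∀ ε : ℝ, 0 < ε → ∃ f : ℕ →₀ ℝ, BY.q (y - j f) < ε)
    (bY : QBasis BY) (huvs : ∀ n : ℕ, bY.vec n = j (Finsupp.single n 1))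
    (s : ℝ) (hs : 1 ≤ s) (hupper : S.UpperEst s)
    (q : ℝ≥0∞) (hq : 0 < q) (hlower : S.LowerEstE q) :
    (∀ r : ℕ, bX.toBioSystem.ktilde r ≤ bY.toBioSystem.ktilde (σ.M r)) ∧
    ∃ C : ℝ, ∀ r : ℕ, bY.toBioSystem.ktilde (σ.M r) ≤
      C * max (bX.toBioSystem.ktilde r)
        (max (etaParam B bX s r) (betaParam B bX q r)) :=
  statement14_general B bX S σ BY j hiso bY huvs s (zero_lt_one.trans_le hs) hupper q hq hlower

end AGpaper
end
end
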